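/- arXiv:1006.5909 — 3 statements merged into one kernel-verified Lean document; each statement's English description precedes it below -/
import Mathlib

section
/- Let G be a finite subgroup of SL(2,ℂ) such that G/{±Id} is isomorphic to the alternating group A₅ (i.e., G is conjugate to the binary icosahedral group). Consider the induced action of G on the 4-dimensional space V = Sym³(ℂ²) of homogeneous degree-3 polynomials in two variables, given by (g·f)(v) = f(g⁻¹v). Then: (1) this 4-dimensional representation of G is irreducible; and (2) the induced linear group on V has no nonzero semi-invariant homogeneous polynomials of degree at most 3 (in 4 variables, i.e., as polynomial functions on V). -/
open Matrix MvPolynomial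

/-- The substitution action of `SL(2, ℂ)` on polynomials in two variables:
`(g • f)(v) = f(g⁻¹ v)`. -/
noncomputable def cubicAct (g : SpecialLinearGroup (Fin 2) ℂ)
    (f : MvPolynomial (Fin 2) ℂ) : MvPolynomial (Fin 2) ℂ :=
  MvPolynomial.aeval
    (fun i => ∑ j : Fin 2,
      MvPolynomial.C ((g⁻¹ : SpecialLinearGroup (Fin 2) ℂ) i j) * MvPolynomial.X j) f

/-- Coordinates of a binary cubic form with respect to the monomial basis
`x³, x²y, xy², y³` of `Sym³(ℂ²)`. -/
noncomputable def cubicCoords (f : MvPolynomial (Fin 2) ℂ) : Fin 4 → ℂ :=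
  fun i => MvPolynomial.coeff
    (Finsupp.single (0 : Fin 2) (3 - (i : ℕ)) + Finsupp.single (1 : Fin 2) (i : ℕ)) f


namespace Ico


abbrev R2 := MvPolynomial (Fin 2) ℂ

/-- the action as an algebra hom -/
noncomputable def act (g : (SpecialLinearGroup (Fin 2) ℂ)) : R2 →ₐ[ℂ] R2 :=
  MvPolynomial.aeval (fun i => ∑ j : Fin 2,
      MvPolynomial.C ((g⁻¹ : SpecialLinearGroup (Fin 2) ℂ) i j) * MvPolynomial.X j)

lemma cubicAct_eq (g : (SpecialLinearGroup (Fin 2) ℂ)) (f : R2) : cubicAct g f = act g f := rfl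

lemma act_X (g : (SpecialLinearGroup (Fin 2) ℂ)) (i : Fin 2) :
    act g⁻¹ (X i) = C (g i 0) * X 0 + C (g i 1) * X 1 := by
  simp [act, Fin.sum_univ_two]

lemma act_mul (g h : (SpecialLinearGroup (Fin 2) ℂ)) (f : R2) : act (g * h) f = act g (act h f) := by
  have : act (g * h) = (act g).comp (act h) := by
    apply MvPolynomial.algHom_ext
    intro i
    obtain ⟨g, rfl⟩ : ∃ g', g = g'⁻¹ := ⟨g⁻¹, by simp⟩
    obtain ⟨h, rfl⟩ : ∃ g', h = g'⁻¹ := ⟨h⁻¹, by simp⟩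
    rw [← _root_.mul_inv_rev, AlgHom.comp_apply, act_X, act_X, map_add, map_mul, map_mul,
      act_X, act_X, MvPolynomial.algHom_C, MvPolynomial.algHom_C]
    simp only [Matrix.SpecialLinearGroup.coe_mul, Matrix.mul_apply, Fin.sum_univ_two, map_add, map_mul,
      MvPolynomial.algebraMap_eq]
    ring
  rw [this]; rfl

lemma act_one (f : R2) : act 1 f = f := by
  have : act 1 = AlgHom.id ℂ R2 := by
    apply MvPolynomial.algHom_ext
    intro i
    rw [← inv_one, act_X]
    fin_cases i <;> simp
  rw [this]; rfl

lemma act_hom (g : (SpecialLinearGroup (Fin 2) ℂ)) {f : R2} {n : ℕ} (hf : f.IsHomogeneous n) : (act g f).IsHomogeneous n := by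
  have h1 : ∀ i : Fin 2, (∑ j : Fin 2,
      MvPolynomial.C ((g⁻¹ : SpecialLinearGroup (Fin 2) ℂ) i j) * MvPolynomial.X j : R2).IsHomogeneous 1 := by
    intro i
    apply MvPolynomial.IsHomogeneous.sum
    intro j _
    exact MvPolynomial.isHomogeneous_C_mul_X _ _
  have := MvPolynomial.IsHomogeneous.aeval hf _ h1
  rw [one_mul] at this
  exact this

noncomputable def e (i : Fin 4) : R2 := X 0 ^ (3 - (i : ℕ)) * X 1 ^ (i : ℕ)

lemma e_hom (i : Fin 4) : (e i).IsHomogeneous 3 := by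
  have := ((MvPolynomial.isHomogeneous_X ℂ (0 : Fin 2)).pow (3 - (i:ℕ))).mul
    ((MvPolynomial.isHomogeneous_X ℂ (1 : Fin 2)).pow (i:ℕ))
  have h : 1 * (3 - (i:ℕ)) + 1 * (i:ℕ) = 3 := by omega
  rw [h] at this
  exact this

lemma e_monomial (i : Fin 4) : e i = monomial (Finsupp.single (0 : Fin 2) (3 - (i : ℕ)) + Finsupp.single (1 : Fin 2) (i : ℕ)) 1 := by
  rw [e, X_pow_eq_monomial, X_pow_eq_monomial, monomial_mul, one_mul]

lemma coords_e (i j : Fin 4) : cubicCoords (e i) j = if i = j then 1 else 0 := by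
  rw [cubicCoords, e_monomial, coeff_monomial]
  congr 1
  apply propext
  constructor
  · intro h
    have := DFunLike.congr_fun h 1
    simp at this
    exact Fin.ext this
  · rintro rfl; rfl

noncomputable def coordsL : R2 →ₗ[ℂ] (Fin 4 → ℂ) where
  toFun := cubicCoords
  map_add' := by intros; ext; simp [cubicCoords]
  map_smul' := by intros; ext; simp [cubicCoords]

lemma coordsL_apply (f : R2) : coordsL f = cubicCoords f := rfl

lemma coords_sum (c : Fin 4 → ℂ) : cubicCoords (∑ i, c i • e i) = c := by
  rw [← coordsL_apply]
  ext j
  simp only [map_sum, map_smul]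
  simp [coordsL_apply, coords_e, Finset.sum_apply]

lemma sum_hom (c : Fin 4 → ℂ) : (∑ i, c i • e i).IsHomogeneous 3 := by
  have : (∑ i, c i • e i) ∈ homogeneousSubmodule (Fin 2) ℂ 3 :=
    Submodule.sum_mem _ fun i _ => Submodule.smul_mem _ _ (e_hom i)
  exact this

lemma coords_inj {f h : R2} (hf : f.IsHomogeneous 3) (hh : h.IsHomogeneous 3)
    (H : cubicCoords f = cubicCoords h) : f = h := by
  ext m
  by_cases hm : m.degree = 3
  · have h2 : m 0 + m 1 = 3 := by
      rw [Finsupp.degree_eq_sum] at hm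
      simpa [Fin.sum_univ_two] using hm
    have := congr_fun H ⟨m 1, by omega⟩
    simp only [cubicCoords] at this
    have hm' : Finsupp.single (0 : Fin 2) (3 - m 1) + Finsupp.single (1 : Fin 2) (m 1) = m := by
      ext i; fin_cases i
      · simp; omega
      · simp
    rwa [hm'] at this
  · rw [hf.coeff_eq_zero hm, hh.coeff_eq_zero hm]

lemma eq_sum {f : R2} (hf : f.IsHomogeneous 3) : f = ∑ i, cubicCoords f i • e i :=
  coords_inj hf (sum_hom _) (coords_sum _).symm

lemma iso {V : Type*} [AddCommGroup V] [Module ℂ V] (W : Submodule ℂ V) (L : V →ₗ[ℂ] V)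
    (hL : ∀ w ∈ W, L w ∈ W) (e0 e1 e2 e3 : V) (l0 l1 l2 l3 : ℂ)
    (h0 : L e0 = l0 • e0) (h1 : L e1 = l1 • e1) (h2 : L e2 = l2 • e2) (h3 : L e3 = l3 • e3)
    (h01 : l0 ≠ l1) (h02 : l0 ≠ l2) (h03 : l0 ≠ l3) (c0 c1 c2 c3 : ℂ)
    (hw : c0 • e0 + c1 • e1 + c2 • e2 + c3 • e3 ∈ W) (hc : c0 ≠ 0) : e0 ∈ W := by
  have key : ∀ l w, w ∈ W → L w - l • w ∈ W := fun l w h => W.sub_mem (hL w h) (W.smul_mem _ h)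
  have := key l3 _ (key l2 _ (key l1 _ hw))
  simp only [map_add, map_sub, map_smul, h0, h1, h2, h3] at this
  have h : (c0 * (l0 - l1) * (l0 - l2) * (l0 - l3)) • e0 ∈ W := by
    convert this using 1
    module
  have hne : c0 * (l0 - l1) * (l0 - l2) * (l0 - l3) ≠ 0 := by
    simp [sub_ne_zero, *]
  exact (W.smul_mem_iff hne).1 h

lemma act_e_diag (D : (SpecialLinearGroup (Fin 2) ℂ)) (z : ℂ) (hz : z ≠ 0) (h00 : D 0 0 = z) (h01 : D 0 1 = 0)
    (h10 : D 1 0 = 0) (h11 : D 1 1 = z⁻¹) :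
    act D⁻¹ (e 0) = (z ^ 3) • e 0 ∧ act D⁻¹ (e 1) = z • e 1 ∧ act D⁻¹ (e 2) = z⁻¹ • e 2 ∧
    act D⁻¹ (e 3) = (z⁻¹ ^ 3) • e 3 := by
  have hzz : (C z : R2) * C z⁻¹ = 1 := by rw [← C_mul, mul_inv_cancel₀ hz, C_1]
  refine ⟨?_, ?_, ?_, ?_⟩ <;> 
    simp only [e, map_mul, map_pow, act_X, h00, h01, h10, h11, C_0, zero_mul, add_zero, zero_add,
      MvPolynomial.smul_eq_C_mul, Fin.val_zero, Fin.val_one, Fin.val_two, Fin.coe_ofNat_eq_mod] <;>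
    norm_num
  · ring
  · linear_combination (C z * X 0 ^ 2 * X 1) * hzz
  · linear_combination (C z⁻¹ * X 0 * X 1 ^ 2) * hzz
  · ring

lemma act_e_gen (A : (SpecialLinearGroup (Fin 2) ℂ)) (a b c d : ℂ) (h00 : A 0 0 = a) (h01 : A 0 1 = b)
    (h10 : A 1 0 = c) (h11 : A 1 1 = d) :
    act A⁻¹ (e 0) = (a ^ 3) • e 0 + (3 * a ^ 2 * b) • e 1 + (3 * a * b ^ 2) • e 2 + (b ^ 3) • e 3 ∧
    act A⁻¹ (e 1) = (a ^ 2 * c) • e 0 + (a ^ 2 * d + 2 * a * b * c) • e 1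
      + (2 * a * b * d + b ^ 2 * c) • e 2 + (b ^ 2 * d) • e 3 ∧
    act A⁻¹ (e 2) = (a * c ^ 2) • e 0 + (b * c ^ 2 + 2 * a * c * d) • e 1
      + (a * d ^ 2 + 2 * b * c * d) • e 2 + (b * d ^ 2) • e 3 ∧
    act A⁻¹ (e 3) = (c ^ 3) • e 0 + (3 * c ^ 2 * d) • e 1 + (3 * c * d ^ 2) • e 2 + (d ^ 3) • e 3 := by
  have h3 : (C 3 : R2) = 3 := rfl
  have h2 : (C 2 : R2) = 2 := rfl
  refine ⟨?_, ?_, ?_, ?_⟩ <;> 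
    simp only [e, map_mul, map_pow, map_add, act_X, h00, h01, h10, h11, 
      MvPolynomial.smul_eq_C_mul, Fin.val_zero, Fin.val_one, Fin.val_two, Fin.coe_ofNat_eq_mod, h2, h3] <;>
    norm_num <;> ring

lemma core1 (W : Submodule ℂ R2) (hW : W ≤ homogeneousSubmodule (Fin 2) ℂ 3) (D A : (SpecialLinearGroup (Fin 2) ℂ))
    (hD : ∀ f ∈ W, act D⁻¹ f ∈ W) (hA : ∀ f ∈ W, act A⁻¹ f ∈ W)
    (z : ℂ) (hz : z ≠ 0) (h00 : D 0 0 = z) (h01 : D 0 1 = 0)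
    (h10 : D 1 0 = 0) (h11 : D 1 1 = z⁻¹)
    (hz2 : z ^ 2 ≠ 1) (hz4 : z ^ 4 ≠ 1) (hz6 : z ^ 6 ≠ 1)
    (ha : A 0 0 ≠ 0) (hb : A 0 1 ≠ 0) (hc : A 1 0 ≠ 0) (hd : A 1 1 ≠ 0) :
    W = ⊥ ∨ W = homogeneousSubmodule (Fin 2) ℂ 3 := by
  obtain ⟨d0, d1, d2, d3⟩ := act_e_diag D z hz h00 h01 h10 h11
  have n01 : z ^ 3 ≠ z := fun h => hz2 (by apply mul_left_cancel₀ hz; linear_combination h)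
  have n02 : z ^ 3 ≠ z⁻¹ := fun h => hz4 (by field_simp at h; linear_combination h)
  have n03 : z ^ 3 ≠ z⁻¹ ^ 3 := fun h => hz6 (by field_simp at h; linear_combination h)
  have n12 : z ≠ z⁻¹ := fun h => hz2 (by field_simp at h; linear_combination h)
  have n13 : z ≠ z⁻¹ ^ 3 := fun h => hz4 (by field_simp at h; linear_combination h)
  have n23 : z⁻¹ ≠ z⁻¹ ^ 3 := fun h => hz2 (by field_simp at h; linear_combination h)
  have key : ∀ c0 c1 c2 c3 : ℂ, c0 • e 0 + c1 • e 1 + c2 • e 2 + c3 • e 3 ∈ W →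
      (c0 ≠ 0 → e 0 ∈ W) ∧ (c1 ≠ 0 → e 1 ∈ W) ∧ (c2 ≠ 0 → e 2 ∈ W) ∧ (c3 ≠ 0 → e 3 ∈ W) := by
    intro c0 c1 c2 c3 h
    refine ⟨?_, ?_, ?_, ?_⟩
    · exact iso W (act D⁻¹).toLinearMap hD _ _ _ _ _ _ _ _ d0 d1 d2 d3 n01 n02 n03 c0 c1 c2 c3 h
    · exact iso W (act D⁻¹).toLinearMap hD _ _ _ _ _ _ _ _ d1 d0 d2 d3 n01.symm n12 n13 c1 c0 c2 c3
        (by convert h using 1; module)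
    · exact iso W (act D⁻¹).toLinearMap hD _ _ _ _ _ _ _ _ d2 d0 d1 d3 n02.symm n12.symm n23 c2 c0 c1 c3
        (by convert h using 1; module)
    · exact iso W (act D⁻¹).toLinearMap hD _ _ _ _ _ _ _ _ d3 d0 d1 d2 n03.symm n13.symm n23.symm c3 c0 c1 c2
        (by convert h using 1; module)
  obtain ⟨a0, a1, a2, a3⟩ := act_e_gen A _ _ _ _ rfl rfl rfl rfl
  have full : e 0 ∈ W → W = homogeneousSubmodule (Fin 2) ℂ 3 := by
    intro h
    apply le_antisymm hW
    intro f hf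
    have hf' : f.IsHomogeneous 3 := hf
    have := hA _ h
    rw [a0] at this
    obtain ⟨-, k1, k2, k3⟩ := key _ _ _ _ this
    rw [eq_sum hf']
    apply Submodule.sum_mem
    intro i _
    apply Submodule.smul_mem
    fin_cases i
    · exact h
    · exact k1 (by simp [ha, hb])
    · exact k2 (by simp [ha, hb])
    · exact k3 (by simp [hb])
  by_cases hbot : W = ⊥
  · exact Or.inl hbot
  right
  obtain ⟨f, hf, hf0⟩ := W.exists_mem_ne_zero_of_ne_bot hbot
  have hfs := eq_sum (hW hf : f.IsHomogeneous 3)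
  rw [Fin.sum_univ_four] at hfs
  apply full
  have hf2 := hf
  rw [hfs] at hf2
  obtain ⟨k0, k1, k2, k3⟩ := key _ _ _ _ hf2
  by_cases c0 : cubicCoords f 0 = 0
  · by_cases c1 : cubicCoords f 1 = 0
    · by_cases c2 : cubicCoords f 2 = 0
      · by_cases c3 : cubicCoords f 3 = 0
        · exfalso; apply hf0; rw [hfs]; simp [c0, c1, c2, c3]
        · have := hA _ (k3 c3)
          rw [a3] at this
          exact (key _ _ _ _ this).1 (by simp [hc])
      · have := hA _ (k2 c2)
        rw [a2] at this
        exact (key _ _ _ _ this).1 (by simp [ha, hc])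
    · have := hA _ (k1 c1)
      rw [a1] at this
      exact (key _ _ _ _ this).1 (by simp [ha, hc])
  · exact k0 c0

lemma core2 (B : R2 →ₗ[ℂ] R2 →ₗ[ℂ] ℂ) (hB : ∀ f h, B f h = B h f) (D A : (SpecialLinearGroup (Fin 2) ℂ))
    (hD : ∀ f : R2, f.IsHomogeneous 3 → B (act D⁻¹ f) (act D⁻¹ f) = B f f)
    (r : ℂ) (hA : ∀ f : R2, f.IsHomogeneous 3 → B (act A⁻¹ f) (act A⁻¹ f) = r * B f f)
    (z : ℂ) (hz : z ≠ 0) (h00 : D 0 0 = z) (h01 : D 0 1 = 0)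
    (h10 : D 1 0 = 0) (h11 : D 1 1 = z⁻¹)
    (hz2 : z ^ 2 ≠ 1) (hz4 : z ^ 4 ≠ 1) (hz6 : z ^ 6 ≠ 1)
    (ha : A 0 0 ≠ 0) (hb : A 0 1 ≠ 0) (f : R2) (hf : f.IsHomogeneous 3) :
    B f f = 0 := by
  obtain ⟨d0, d1, d2, d3⟩ := act_e_diag D z hz h00 h01 h10 h11
  obtain ⟨a0, a1, -, -⟩ := act_e_gen A _ _ _ _ rfl rfl rfl rfl
  have hdet : A 0 0 * A 1 1 - A 0 1 * A 1 0 = 1 := by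
    rw [← Matrix.det_fin_two]; exact A.2
  have hD2 : ∀ i j, B (act D⁻¹ (e i)) (act D⁻¹ (e j)) = B (e i) (e j) := by
    intro i j
    have h1 := hD (e i + e j) ((e_hom i).add (e_hom j))
    have h2 := hD _ (e_hom i)
    have h3 := hD _ (e_hom j)
    simp only [map_add, LinearMap.add_apply] at h1
    rw [hB (act D⁻¹ (e j)) (act D⁻¹ (e i)), hB (e j) (e i)] at h1
    linear_combination (h1 - h2 - h3) / 2
  have z0 : ∀ i j (l : ℂ), B (act D⁻¹ (e i)) (act D⁻¹ (e j)) = l * B (e i) (e j) → l ≠ 1 → 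
      B (e i) (e j) = 0 := by
    intro i j l h1 h2
    rw [hD2] at h1
    have : (l - 1) * B (e i) (e j) = 0 := by linear_combination -h1
    exact (mul_eq_zero.1 this).resolve_left (sub_ne_zero.2 h2)
  have b00 : B (e 0) (e 0) = 0 := z0 0 0 (z ^ 6) (by rw [d0]; simp; ring) hz6
  have b01 : B (e 0) (e 1) = 0 := z0 0 1 (z ^ 4) (by rw [d0, d1]; simp; ring) hz4
  have b02 : B (e 0) (e 2) = 0 := z0 0 2 (z ^ 2) (by rw [d0, d2]; simp; field_simp) hz2
  have b11 : B (e 1) (e 1) = 0 := z0 1 1 (z ^ 2) (by rw [d1]; simp; ring) hz2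
  have b22 : B (e 2) (e 2) = 0 := z0 2 2 ((z ^ 2)⁻¹) (by rw [d2]; simp; ring) (by simpa using hz2)
  have b13 : B (e 1) (e 3) = 0 := z0 1 3 ((z ^ 2)⁻¹) (by rw [d1, d3]; simp; field_simp) (by simpa using hz2)
  have b23 : B (e 2) (e 3) = 0 := z0 2 3 ((z ^ 4)⁻¹) (by rw [d2, d3]; simp; ring) (by simpa using hz4)
  have b33 : B (e 3) (e 3) = 0 := z0 3 3 ((z ^ 6)⁻¹) (by rw [d3]; simp; ring) (by simpa using hz6)
  have q0 := hA _ (e_hom 0)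
  have q1 := hA _ (e_hom 1)
  rw [a0] at q0
  rw [a1] at q1
  simp only [map_add, map_smul, LinearMap.add_apply, LinearMap.smul_apply, smul_eq_mul,
    hB (e 1) (e 0), hB (e 2) (e 0), hB (e 3) (e 0), hB (e 2) (e 1), hB (e 3) (e 1), hB (e 3) (e 2),
    b00, b01, b02, b11, b22, b13, b23, b33] at q0 q1
  generalize A 0 0 = a at *
  generalize A 0 1 = b at *
  generalize A 1 0 = c at *
  generalize A 1 1 = d at *
  have p0 : B (e 0) (e 3) + 9 * B (e 1) (e 2) = 0 := by
    apply mul_left_cancel₀ (mul_ne_zero two_ne_zero (mul_ne_zero (pow_ne_zero 3 ha) (pow_ne_zero 3 hb)))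
    linear_combination q0
  have p1 : B (e 1) (e 2) = 0 := by
    have : (a * b) * (4 * B (e 1) (e 2)) = 0 := by
      linear_combination q1 - 2 * a ^ 2 * b ^ 2 * c * d * p0
        - 4 * (a * d - b * c + 1) * a * b * B (e 1) (e 2) * hdet
    simpa [ha, hb] using this
  have p3 : B (e 0) (e 3) = 0 := by simpa [p1] using p0
  rw [eq_sum hf, Fin.sum_univ_four]
  simp only [map_add, map_smul, LinearMap.add_apply, LinearMap.smul_apply, smul_eq_mul,
    hB (e 1) (e 0), hB (e 2) (e 0), hB (e 3) (e 0), hB (e 2) (e 1), hB (e 3) (e 1), hB (e 3) (e 2),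
    b00, b01, b02, b11, b22, b13, b23, b33, p1, p3]
  ring

lemma lin (P : MvPolynomial (Fin 4) ℂ) (hP : P.IsHomogeneous 1) :
    ∃ l : (Fin 4 → ℂ) →ₗ[ℂ] ℂ, ∀ c, eval c P = l c := by
  have : P ∈ homogeneousSubmodule (Fin 4) ℂ 1 := hP
  rw [homogeneousSubmodule_one_eq_span_X] at this
  clear hP
  induction this using Submodule.span_induction with
  | mem x h =>
    obtain ⟨i, rfl⟩ := h
    exact ⟨LinearMap.proj i, by simp⟩
  | zero => exact ⟨0, by simp⟩
  | add x y _ _ hx hy =>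
    obtain ⟨l, hl⟩ := hx
    obtain ⟨m, hm⟩ := hy
    exact ⟨l + m, by simp [hl, hm]⟩
  | smul a x _ hx =>
    obtain ⟨l, hl⟩ := hx
    exact ⟨a • l, by simp [hl, MvPolynomial.smul_eval]⟩

lemma quad (P : MvPolynomial (Fin 4) ℂ) (hP : P.IsHomogeneous 2) :
    ∃ B : (Fin 4 → ℂ) →ₗ[ℂ] (Fin 4 → ℂ) →ₗ[ℂ] ℂ, (∀ x y, B x y = B y x) ∧
      ∀ c, eval c P = B c c := by
  have : P ∈ homogeneousSubmodule (Fin 4) ℂ 2 := hP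
  rw [← homogeneousSubmodule_one_pow, pow_two] at this
  clear hP
  induction this using Submodule.mul_induction_on' with
  | mem_mul_mem p hp q hq =>
    obtain ⟨l, hl⟩ := lin p hp
    obtain ⟨m, hm⟩ := lin q hq
    refine ⟨(1 / 2 : ℂ) • (LinearMap.BilinForm.linMulLin l m + LinearMap.BilinForm.linMulLin m l), ?_, ?_⟩
    · intro x y
      simp
      ring
    · intro c
      simp [hl, hm]
      ring
  | add p _ q _ hp hq =>
    obtain ⟨l, hl, hl'⟩ := hp
    obtain ⟨m, hm, hm'⟩ := hq
    refine ⟨l + m, ?_, ?_⟩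
    · intro x y
      simp [hl x y, hm x y]
    · intro c
      simp [hl', hm']

end Ico

namespace Ico

open scoped commutatorElement

def pA : Equiv.Perm (Fin 5) := ⟨![0, 1, 3, 4, 2], ![0, 1, 4, 2, 3], by decide, by decide⟩
def pB : Equiv.Perm (Fin 5) := ⟨![0, 3, 1, 2, 4], ![0, 2, 3, 1, 4], by decide, by decide⟩
def pC : Equiv.Perm (Fin 5) := ⟨![3, 2, 0, 4, 1], ![2, 4, 1, 0, 3], by decide, by decide⟩

lemma exists_A5 : ∃ s t v : alternatingGroup (Fin 5),
    ⁅s, t⁆ ^ 2 = 1 ∧ ⁅s, t⁆ ≠ 1 ∧ ⁅s, v⁆ ^ 5 = 1 ∧ ⁅s, v⁆ ≠ 1 ∧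
    (⁅s, t⁆ * ⁅s, v⁆) ^ 3 = 1 ∧ ⁅s, t⁆ * ⁅s, v⁆ ≠ 1 := by
  refine ⟨⟨pA, ?_⟩, ⟨pB, ?_⟩, ⟨pC, ?_⟩, ?_⟩
  · rw [Equiv.Perm.mem_alternatingGroup]; decide
  · rw [Equiv.Perm.mem_alternatingGroup]; decide
  · rw [Equiv.Perm.mem_alternatingGroup]; decide
  · decide

lemma cayley (k : (SpecialLinearGroup (Fin 2) ℂ)) : (k : Matrix (Fin 2) (Fin 2) ℂ) * k = (k : Matrix (Fin 2) (Fin 2) ℂ).trace • (k : Matrix (Fin 2) (Fin 2) ℂ) - 1 := by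
  have hdet : k 0 0 * k 1 1 - k 0 1 * k 1 0 = 1 := by
    rw [← Matrix.det_fin_two]; exact k.2
  ext i j
  fin_cases i <;> fin_cases j <;>
    simp [Matrix.mul_apply, Fin.sum_univ_two, Matrix.trace_fin_two] <;>
    first | linear_combination hdet | linear_combination -hdet | ring

lemma scalar_of {k : (SpecialLinearGroup (Fin 2) ℂ)} {p q : ℂ} (hp : p ≠ 0) 
    (h : p • (k : Matrix (Fin 2) (Fin 2) ℂ) = q • 1) : k = 1 ∨ k = -1 := by
  have h2 : (k : Matrix (Fin 2) (Fin 2) ℂ) = (q / p) • 1 := by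
    rw [div_eq_inv_mul, mul_smul, ← h, smul_smul, inv_mul_cancel₀ hp, one_smul]
  have h3 : (q / p) ^ 2 = 1 := by
    have := k.2
    rw [h2] at this
    simpa using this
  rcases (mul_self_eq_one_iff.1 ((pow_two _).symm.trans h3)) with h | h
  · left; ext i j; rw [h2, h]; simp
  · right; ext i j; rw [h2, h]; simp

lemma coe_pm {k : (SpecialLinearGroup (Fin 2) ℂ)} (h : k = 1 ∨ k = -1) : ∃ q : ℂ, (k : Matrix (Fin 2) (Fin 2) ℂ) = q • 1 := by
  rcases h with rfl | rfl
  · exact ⟨1, by simp⟩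
  · exact ⟨-1, by simp⟩

lemma tr2 (k : (SpecialLinearGroup (Fin 2) ℂ)) (h : k ^ 2 = 1 ∨ k ^ 2 = -1) (hk : ¬ (k = 1 ∨ k = -1)) :
    (k : Matrix (Fin 2) (Fin 2) ℂ).trace = 0 := by
  obtain ⟨q, hq⟩ := coe_pm h
  by_contra ht
  apply hk
  apply scalar_of ht (q := q + 1)
  have := cayley k
  rw [Matrix.SpecialLinearGroup.coe_pow, pow_two, this] at hq
  rw [add_smul, ← hq]; simp

lemma sq_eq (k : (SpecialLinearGroup (Fin 2) ℂ)) (h : (k : Matrix (Fin 2) (Fin 2) ℂ).trace = 0) : k ^ 2 = -1 := by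
  have := cayley k
  rw [h] at this
  ext i j
  rw [Matrix.SpecialLinearGroup.coe_pow, pow_two, this]
  simp

lemma tr3 (k : (SpecialLinearGroup (Fin 2) ℂ)) (h : k ^ 3 = 1 ∨ k ^ 3 = -1) (hk : ¬ (k = 1 ∨ k = -1)) :
    (k : Matrix (Fin 2) (Fin 2) ℂ).trace ^ 2 = 1 := by
  obtain ⟨q, hq⟩ := coe_pm h
  by_contra ht
  have ht' := sub_ne_zero.2 ht
  apply hk
  apply scalar_of ht' (q := q + (k : Matrix (Fin 2) (Fin 2) ℂ).trace)
  have := cayley k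
  generalize (k : Matrix (Fin 2) (Fin 2) ℂ).trace = t at *
  rw [Matrix.SpecialLinearGroup.coe_pow] at hq
  generalize (k : Matrix (Fin 2) (Fin 2) ℂ) = K at *
  have h3 : K ^ 3 = (t ^ 2 - 1) • K - t • 1 := by
    rw [pow_succ, pow_two, this, sub_mul, smul_mul_assoc, this, one_mul]; module
  rw [add_smul, ← hq, h3]; module

lemma tr5 (k : (SpecialLinearGroup (Fin 2) ℂ)) (h : k ^ 5 = 1 ∨ k ^ 5 = -1) (hk : ¬ (k = 1 ∨ k = -1)) :
    (k : Matrix (Fin 2) (Fin 2) ℂ).trace ^ 4 - 3 * (k : Matrix (Fin 2) (Fin 2) ℂ).trace ^ 2 + 1 = 0 := by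
  obtain ⟨q, hq⟩ := coe_pm h
  by_contra ht
  apply hk
  apply scalar_of ht (q := q + ((k : Matrix (Fin 2) (Fin 2) ℂ).trace ^ 3 - 2 * (k : Matrix (Fin 2) (Fin 2) ℂ).trace))
  have := cayley k
  clear ht
  generalize (k : Matrix (Fin 2) (Fin 2) ℂ).trace = t at *
  rw [Matrix.SpecialLinearGroup.coe_pow] at hq
  generalize (k : Matrix (Fin 2) (Fin 2) ℂ) = K at *
  have h3 : K ^ 3 = (t ^ 2 - 1) • K - t • 1 := by
    rw [pow_succ, pow_two, this, sub_mul, smul_mul_assoc, this, one_mul]; module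
  have h4 : K ^ 4 = (t ^ 3 - 2 * t) • K - (t ^ 2 - 1) • 1 := by
    rw [pow_succ, h3, sub_mul, smul_mul_assoc, smul_mul_assoc, this, one_mul]; module
  have h5 : K ^ 5 = (t ^ 4 - 3 * t ^ 2 + 1) • K - (t ^ 3 - 2 * t) • 1 := by
    rw [pow_succ, h4, sub_mul, smul_mul_assoc, smul_mul_assoc, this, one_mul]; module
  rw [add_smul q, ← hq, h5]; module

lemma diagonalize (k : (SpecialLinearGroup (Fin 2) ℂ))
    (ht : (k : Matrix (Fin 2) (Fin 2) ℂ).trace ^ 4 - 3 * (k : Matrix (Fin 2) (Fin 2) ℂ).trace ^ 2 + 1 = 0) :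
    ∃ (M : (SpecialLinearGroup (Fin 2) ℂ)) (z : ℂ), z ≠ 0 ∧ z ^ 8 + z ^ 6 + z ^ 4 + z ^ 2 + 1 = 0 ∧
      (M⁻¹ * k * M) 0 0 = z ∧ (M⁻¹ * k * M) 0 1 = 0 ∧ (M⁻¹ * k * M) 1 0 = 0 ∧
      (M⁻¹ * k * M) 1 1 = z⁻¹ := by
  have hdet : k 0 0 * k 1 1 - k 0 1 * k 1 0 = 1 := by
    rw [← Matrix.det_fin_two]; exact k.2
  rw [Matrix.trace_fin_two] at ht
  obtain ⟨z, hz⟩ : ∃ z : ℂ, z ^ 2 - (k 0 0 + k 1 1) * z + 1 = 0 := by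
    obtain ⟨s, hs⟩ := IsAlgClosed.exists_pow_nat_eq ((k 0 0 + k 1 1) ^ 2 - 4) (n := 2) (by norm_num)
    exact ⟨((k 0 0 + k 1 1) + s) / 2, by linear_combination hs / 4⟩
  have hz0 : z ≠ 0 := by rintro rfl; simp at hz
  have htz : k 0 0 + k 1 1 = z + z⁻¹ := by field_simp; linear_combination -hz
  have hz8 : z ^ 8 + z ^ 6 + z ^ 4 + z ^ 2 + 1 = 0 := by
    rw [htz] at ht; field_simp at ht; linear_combination ht
  have hz2 : z ^ 2 ≠ 1 := by
    intro h
    have : (5 : ℂ) = 0 := by linear_combination hz8 - (z ^ 6 + 2 * z ^ 4 + 3 * z ^ 2 + 4) * h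
    norm_num at this
  have ev : ∀ y : ℂ, y ^ 2 - (k 0 0 + k 1 1) * y + 1 = 0 → ∃ v : Fin 2 → ℂ, v ≠ 0 ∧
      k 0 0 * v 0 + k 0 1 * v 1 = y * v 0 ∧ k 1 0 * v 0 + k 1 1 * v 1 = y * v 1 := by
    intro y hy
    have : ((k : Matrix (Fin 2) (Fin 2) ℂ) - y • 1).det = 0 := by
      rw [Matrix.det_fin_two]; simp; linear_combination hdet + hy
    obtain ⟨v, hv, h⟩ := Matrix.exists_mulVec_eq_zero_iff.2 this
    have h0 := congr_fun h 0
    have h1 := congr_fun h 1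
    simp [Matrix.mulVec, dotProduct, Fin.sum_univ_two] at h0 h1
    exact ⟨v, hv, by linear_combination h0, by linear_combination h1⟩
  obtain ⟨v, hv, v0, v1⟩ := ev z hz
  obtain ⟨w, hw, w0, w1⟩ := ev z⁻¹ (by rw [htz]; field_simp; ring)
  have hzi : z - z⁻¹ ≠ 0 := by
    intro h; field_simp at h; exact hz2 (by linear_combination h)
  have hδ : v 0 * w 1 - v 1 * w 0 ≠ 0 := by
    intro h
    have a1 : v 0 * w 0 = 0 := by
      apply mul_left_cancel₀ hzi; linear_combination w0 * v 0 - v0 * w 0 - k 0 1 * h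
    have a2 : v 0 * w 1 = 0 := by
      apply mul_left_cancel₀ hzi; linear_combination w0 * v 1 - v0 * w 1 + (k 0 0 - z⁻¹) * h
    have a3 : v 1 * w 0 = 0 := by linear_combination a2 - h
    have a4 : v 1 * w 1 = 0 := by
      apply mul_left_cancel₀ hzi; linear_combination w1 * v 1 - v1 * w 1 + k 1 0 * h
    apply hv
    have hw' : w 0 ≠ 0 ∨ w 1 ≠ 0 := by
      by_contra! hh
      apply hw; ext i; fin_cases i
      · exact hh.1
      · exact hh.2
    ext i
    rcases hw' with h' | h' <;> fin_cases i <;> simp_all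
  set δ := v 0 * w 1 - v 1 * w 0 with hδdef
  have hinv : δ⁻¹ * (v 0 * w 1 - v 1 * w 0) = 1 := inv_mul_cancel₀ hδ
  obtain ⟨M, hM⟩ : ∃ M : SpecialLinearGroup (Fin 2) ℂ,
      (M : Matrix (Fin 2) (Fin 2) ℂ) = !![δ⁻¹ * v 0, w 0; δ⁻¹ * v 1, w 1] :=
    ⟨⟨!![δ⁻¹ * v 0, w 0; δ⁻¹ * v 1, w 1], by
      rw [Matrix.det_fin_two_of]; linear_combination hinv⟩, rfl⟩
  refine ⟨M, z, hz0, hz8, ?_⟩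
  · rw [Matrix.SpecialLinearGroup.coe_mul, Matrix.SpecialLinearGroup.coe_mul,
      Matrix.SpecialLinearGroup.coe_inv, hM, Matrix.adjugate_fin_two]
    simp only [Matrix.mul_apply, Fin.sum_univ_two, Matrix.of_apply, Matrix.cons_val_zero,
      Matrix.cons_val_one, Matrix.cons_val']
    generalize δ⁻¹ = ε at *
    refine ⟨?_, ?_, ?_, ?_⟩
    · linear_combination ε * w 1 * v0 - ε * w 0 * v1 + z * hinv
    · linear_combination w 1 * w0 - w 0 * w1
    · linear_combination ε ^ 2 * v 0 * v1 - ε ^ 2 * v 1 * v0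
    · linear_combination ε * v 0 * w1 - ε * v 1 * w0 + z⁻¹ * hinv

/-- all group-theoretic input -/
lemma setup (G : Subgroup (SpecialLinearGroup (Fin 2) ℂ))
    (hA5 : ∃ φ : G →* alternatingGroup (Fin 5), Function.Surjective φ ∧
      ∀ g : G, φ g = 1 ↔ ((g : (SpecialLinearGroup (Fin 2) ℂ)) = 1 ∨ (g : (SpecialLinearGroup (Fin 2) ℂ)) = -1)) :
    ∃ (k g n : G) (M : (SpecialLinearGroup (Fin 2) ℂ)) (z : ℂ), (∀ χ : G →* ℂˣ, χ k = 1 ∧ χ n = 1) ∧ (n : (SpecialLinearGroup (Fin 2) ℂ)) = -1 ∧ z ≠ 0 ∧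
      (M⁻¹ * k * M) 0 0 = z ∧ (M⁻¹ * k * M) 0 1 = 0 ∧ (M⁻¹ * k * M) 1 0 = 0 ∧
      (M⁻¹ * k * M) 1 1 = z⁻¹ ∧ z ^ 2 ≠ 1 ∧ z ^ 4 ≠ 1 ∧ z ^ 6 ≠ 1 ∧
      (M⁻¹ * g * M) 0 0 ≠ 0 ∧ (M⁻¹ * g * M) 0 1 ≠ 0 ∧ (M⁻¹ * g * M) 1 0 ≠ 0 ∧
      (M⁻¹ * g * M) 1 1 ≠ 0 := by
  obtain ⟨φ, hφ, hker⟩ := hA5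
  obtain ⟨s, t, v, h1, h2, h3, h4, h5, h6⟩ := exists_A5
  obtain ⟨s, rfl⟩ := hφ s
  obtain ⟨t, rfl⟩ := hφ t
  obtain ⟨v, rfl⟩ := hφ v
  rw [← map_commutatorElement, ← map_commutatorElement] at *
  have hχ : ∀ (χ : G →* ℂˣ) (a b : G), χ ⁅a, b⁆ = 1 := by
    intro χ a b
    rw [map_commutatorElement, commutatorElement_eq_one_iff_mul_comm, mul_comm]
  have hχk := fun χ => hχ χ s v
  have hχg := fun χ => hχ χ s t
  generalize ⁅s, t⁆ = g at *
  generalize ⁅s, v⁆ = k at *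
  rw [← map_mul, ← map_pow, hker] at h5
  rw [← map_mul, Ne, hker] at h6
  rw [← map_pow, hker] at h1 h3
  rw [Ne, hker] at h2 h4
  have tg := tr2 (g : (SpecialLinearGroup (Fin 2) ℂ)) (by simpa using h1) h2
  have tk := tr5 (k : (SpecialLinearGroup (Fin 2) ℂ)) (by simpa using h3) h4
  have tgk := tr3 ((g * k : G) : (SpecialLinearGroup (Fin 2) ℂ)) (by simpa using h5) h6
  obtain ⟨M, z, hz, hz8, m00, m01, m10, m11⟩ := diagonalize (k : (SpecialLinearGroup (Fin 2) ℂ)) tk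
  have z2 : z ^ 2 ≠ 1 := by
    intro h
    have : (5 : ℂ) = 0 := by linear_combination hz8 - (z ^ 6 + 2 * z ^ 4 + 3 * z ^ 2 + 4) * h
    norm_num at this
  have z10 : z ^ 10 = 1 := by linear_combination (z ^ 2 - 1) * hz8
  have z4 : z ^ 4 ≠ 1 := by
    intro h
    apply z2
    linear_combination z10 - z ^ 2 * (z ^ 4 + 1) * h
  have z6 : z ^ 6 ≠ 1 := by
    intro h
    apply z4
    have : z ^ 12 = 1 := by linear_combination (z ^ 6 + 1) * h
    exact absurd (by linear_combination this - z ^ 2 * z10) z2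
  have htr : ∀ x : (SpecialLinearGroup (Fin 2) ℂ), ((M⁻¹ * x * M : (SpecialLinearGroup (Fin 2) ℂ)) : Matrix (Fin 2) (Fin 2) ℂ).trace = (x : Matrix (Fin 2) (Fin 2) ℂ).trace := by
    intro x
    rw [Matrix.SpecialLinearGroup.coe_mul, Matrix.trace_mul_comm, ← Matrix.SpecialLinearGroup.coe_mul, mul_inv_cancel_left]
  rw [← htr] at tg tgk
  have hsplit : M⁻¹ * ((g * k : G) : (SpecialLinearGroup (Fin 2) ℂ)) * M = (M⁻¹ * g * M) * (M⁻¹ * k * M) := by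
    rw [Subgroup.coe_mul]; group
  rw [hsplit, Matrix.SpecialLinearGroup.coe_mul, Matrix.trace_fin_two] at tgk
  simp only [Matrix.mul_apply, Fin.sum_univ_two, m00, m01, m10, m11, mul_zero, add_zero, zero_add] at tgk
  rw [Matrix.trace_fin_two] at tg
  have hdet : (M⁻¹ * g * M) 0 0 * (M⁻¹ * g * M) 1 1 - (M⁻¹ * g * M) 0 1 * (M⁻¹ * g * M) 1 0 = 1 := by
    rw [← Matrix.det_fin_two]; exact (M⁻¹ * g * M).2
  refine ⟨k, g, g ^ 2, M, z, fun χ => ⟨hχk χ, by rw [map_pow, hχg, one_pow]⟩, ?_, hz, m00, m01, m10, m11, z2, z4, z6, ?_⟩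
  · rw [Subgroup.coe_pow]
    exact sq_eq _ (by rw [← htr, Matrix.trace_fin_two, tg])
  generalize (M⁻¹ * g * M) 0 0 = a at *
  generalize (M⁻¹ * g * M) 0 1 = b at *
  generalize (M⁻¹ * g * M) 1 0 = c at *
  generalize (M⁻¹ * g * M) 1 1 = d at *
  obtain rfl : d = -a := by linear_combination tg
  have ha : a ≠ 0 := by rintro rfl; simp at tgk
  have hbc : b * c ≠ 0 := by
    intro h
    have ha2 : a ^ 2 = -1 := by linear_combination -hdet - h
    have e1 : (z - z⁻¹) ^ 2 = -1 := by linear_combination -tgk + (z - z⁻¹) ^ 2 * ha2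
    have e2 : z ^ 4 - z ^ 2 + 1 = 0 := by field_simp at e1; linear_combination e1
    have : z ^ 12 = 1 := by linear_combination (z ^ 8 + z ^ 6 - z ^ 2 - 1) * e2
    exact z2 (by linear_combination this - z ^ 2 * z10)
  exact ⟨ha, left_ne_zero_of_mul hbc, right_ne_zero_of_mul hbc, neg_ne_zero.2 ha⟩

end Ico

/-- For a binary icosahedral group `G ≤ SL(2, ℂ)` (so `G/{±1} ≅ A₅`), the induced
4-dimensional representation on `Sym³(ℂ²)` is irreducible and the induced linear group has no
nonzero semi-invariant homogeneous polynomials of degree at most 3. -/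
theorem stmt_6 (G : Subgroup (SpecialLinearGroup (Fin 2) ℂ)) (hGfin : Finite G)
    (hA5 : ∃ φ : G →* alternatingGroup (Fin 5), Function.Surjective φ ∧
      ∀ g : G, φ g = 1 ↔ ((g : SpecialLinearGroup (Fin 2) ℂ) = 1 ∨
        (g : SpecialLinearGroup (Fin 2) ℂ) = -1)) :
    (∀ W : Submodule ℂ (MvPolynomial (Fin 2) ℂ),
      W ≤ MvPolynomial.homogeneousSubmodule (Fin 2) ℂ 3 →
      (∀ g ∈ G, ∀ f ∈ W, cubicAct g f ∈ W) →
      W = ⊥ ∨ W = MvPolynomial.homogeneousSubmodule (Fin 2) ℂ 3) ∧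
    (∀ (P : MvPolynomial (Fin 4) ℂ) (d : ℕ), 1 ≤ d → d ≤ 3 → P.IsHomogeneous d →
      (∃ χ : G →* ℂˣ, ∀ (g : G) (f : MvPolynomial (Fin 2) ℂ), f.IsHomogeneous 3 →
        MvPolynomial.eval
            (cubicCoords (cubicAct ((g : SpecialLinearGroup (Fin 2) ℂ))⁻¹ f)) P
          = (χ g : ℂ) * MvPolynomial.eval (cubicCoords f) P) →
      P = 0) := by
  obtain ⟨k, g, n, M, z, hχ, hn, hz, h00, h01, h10, h11, z2, z4, z6, ha, hb, hc, hd⟩ :=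
    Ico.setup G hA5
  have conj : ∀ (x : SpecialLinearGroup (Fin 2) ℂ) (f : MvPolynomial (Fin 2) ℂ),
      Ico.act M (Ico.act (M⁻¹ * x * M)⁻¹ f) = Ico.act x⁻¹ (Ico.act M f) := by
    intro x f
    rw [← Ico.act_mul, ← Ico.act_mul]
    congr 2
    group
  have inv1 : ∀ f, Ico.act M (Ico.act M⁻¹ f) = f := by
    intro f; rw [← Ico.act_mul, mul_inv_cancel, Ico.act_one]
  have inv2 : ∀ f, Ico.act M⁻¹ (Ico.act M f) = f := by
    intro f; rw [← Ico.act_mul, inv_mul_cancel, Ico.act_one]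
  constructor
  · intro W hW hG
    have hinv : ∀ x : G, ∀ f ∈ W.comap (Ico.act M).toLinearMap,
        Ico.act (M⁻¹ * x * M)⁻¹ f ∈ W.comap (Ico.act M).toLinearMap := by
      intro x f hf
      rw [Submodule.mem_comap] at hf ⊢
      rw [AlgHom.toLinearMap_apply] at hf ⊢
      rw [conj]
      exact hG _ (G.inv_mem x.2) _ hf
    have hle : W.comap (Ico.act M).toLinearMap ≤ homogeneousSubmodule (Fin 2) ℂ 3 := by
      intro f hf
      have h1 : (Ico.act M f).IsHomogeneous 3 := hW hf
      have h2 := Ico.act_hom M⁻¹ h1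
      rw [inv2] at h2
      exact h2
    rcases Ico.core1 _ hle _ _ (hinv k) (hinv g) z hz h00 h01 h10 h11 z2 z4 z6 ha hb hc hd with h | h
    · left
      rw [Submodule.eq_bot_iff]
      intro f hf
      have : Ico.act M⁻¹ f ∈ W.comap (Ico.act M).toLinearMap := by
        rw [Submodule.mem_comap, AlgHom.toLinearMap_apply, inv1]; exact hf
      rw [h, Submodule.mem_bot] at this
      rw [← inv1 f, this, map_zero]
    · right
      apply le_antisymm hW
      intro f hf
      have : Ico.act M⁻¹ f ∈ homogeneousSubmodule (Fin 2) ℂ 3 := Ico.act_hom M⁻¹ hf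
      rw [← h, Submodule.mem_comap, AlgHom.toLinearMap_apply, inv1] at this
      exact this
  · rintro P d hd1 hd3 hP ⟨χ, hP2⟩
    have hpt : (∀ f : MvPolynomial (Fin 2) ℂ, f.IsHomogeneous 3 → eval (cubicCoords f) P = 0) → P = 0 := by
      intro h
      apply MvPolynomial.funext
      intro c
      rw [← Ico.coords_sum c, h _ (Ico.sum_hom c), map_zero]
    apply hpt
    have hodd : Odd d → ∀ f : MvPolynomial (Fin 2) ℂ, f.IsHomogeneous 3 → eval (cubicCoords f) P = 0 := by
      intro hdo f hf
      have h1 := hP2 n f hf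
      rw [(hχ χ).2, hn] at h1
      have hneg : cubicCoords (cubicAct (-1 : SpecialLinearGroup (Fin 2) ℂ)⁻¹ f) = (-1 : ℂ) • cubicCoords f := by
        have : cubicAct (-1 : SpecialLinearGroup (Fin 2) ℂ)⁻¹ f = (-1 : ℂ) • f := by
          rw [Ico.cubicAct_eq]
          have hs := Ico.eq_sum hf
          rw [Fin.sum_univ_four] at hs
          obtain ⟨d0, d1, d2, d3⟩ := Ico.act_e_diag (-1) (-1) (by norm_num) (by simp) (by simp) (by simp) (by norm_num)
          rw [hs]
          simp only [map_add, map_smul, d0, d1, d2, d3]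
          norm_num
        rw [this, ← Ico.coordsL_apply, map_smul]; rfl
      rw [hneg] at h1
      have h2 : eval ((-1 : ℂ) • cubicCoords f) P = (-1) ^ d * eval (cubicCoords f) P := by
        rw [eval_eq', eval_eq', Finset.mul_sum]
        apply Finset.sum_congr rfl
        intro m hm
        have hdeg : m.degree = d := by
          by_contra hne
          exact (mem_support_iff.1 hm) (hP.coeff_eq_zero hne)
        rw [Finsupp.degree_eq_sum] at hdeg
        simp only [Pi.smul_apply, smul_eq_mul, mul_pow, Finset.prod_mul_distrib]
        rw [Finset.prod_pow_eq_pow_sum, hdeg]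
        ring
      rw [h2, hdo.neg_one_pow] at h1
      simp at h1
      linear_combination -h1 / 2
    interval_cases d
    · exact hodd (by decide)
    · obtain ⟨B, hB, hBP⟩ := Ico.quad P hP
      intro f hf
      let L : MvPolynomial (Fin 2) ℂ →ₗ[ℂ] (Fin 4 → ℂ) := Ico.coordsL ∘ₗ (Ico.act M).toLinearMap
      have hL : ∀ f, L f = cubicCoords (Ico.act M f) := fun _ => rfl
      have hx : ∀ x : G, ∀ f : MvPolynomial (Fin 2) ℂ, f.IsHomogeneous 3 →
          (B.compl₁₂ L L) (Ico.act (M⁻¹ * x * M)⁻¹ f) (Ico.act (M⁻¹ * x * M)⁻¹ f)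
            = (χ x : ℂ) * (B.compl₁₂ L L) f f := by
        intro x f hf
        rw [LinearMap.compl₁₂_apply, LinearMap.compl₁₂_apply, hL, hL, conj, ← hBP, ← hBP]
        exact hP2 x _ (Ico.act_hom M hf)
      have := Ico.core2 (B.compl₁₂ L L) (fun f h => by
          rw [LinearMap.compl₁₂_apply, LinearMap.compl₁₂_apply]; exact hB _ _) _ _
        (fun f hf => by rw [hx k f hf, (hχ χ).1]; simp) _ (hx g) z hz h00 h01 h10 h11 z2 z4 z6 ha hb
        (Ico.act M⁻¹ f) (Ico.act_hom _ hf)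
      rw [LinearMap.compl₁₂_apply, hL, inv1] at this
      rw [hBP]
      exact this
    · exact hodd (by decide)
end

section
/- Let G be a finite subgroup of SL(2,ℂ) such that G/{±Id} is isomorphic to the alternating group A₄ or to the symmetric group S₄ (i.e., G is conjugate to the binary tetrahedral or binary octahedral group). Consider the induced action of G on the 4-dimensional space V = Sym³(ℂ²) of homogeneous degree-3 polynomials in two variables, given by (g·f)(v) = f(g⁻¹v). Then there exists a nonzero nondegenerate quadratic form Q on V that is a semi-invariant of G; equivalently, the induced projective action of G on ℙ(V) ≅ ℙ³ leaves a smooth quadric surface invariant. -/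
open Matrix MvPolynomial

/-- Hankel coefficients of the pairing `f ↦ ⟨f², F⟩` with the sextic `F = q_A q_B q_C`,
where `q_A(v) = det(v, A v)`. -/
noncomputable def hk (A B C : Matrix (Fin 2) (Fin 2) ℂ) : Fin 7 → ℂ :=
  let a0 := A 1 0
  let a1 := A 1 1 - A 0 0
  let a2 := - A 0 1
  let b0 := B 1 0
  let b1 := B 1 1 - B 0 0
  let b2 := - B 0 1
  let c0 := C 1 0
  let c1 := C 1 1 - C 0 0
  let c2 := - C 0 1
  ![60 * (a2*b2*c2), -10 * (a1*b2*c2 + a2*b1*c2 + a2*b2*c1),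
    4 * (a0*b2*c2 + a2*b0*c2 + a2*b2*c0 + a1*b1*c2 + a1*b2*c1 + a2*b1*c1),
    -3 * (a1*b1*c1 + a0*b1*c2 + a0*b2*c1 + a1*b0*c2 + a1*b2*c0 + a2*b0*c1 + a2*b1*c0),
    4 * (a2*b0*c0 + a0*b2*c0 + a0*b0*c2 + a1*b1*c0 + a1*b0*c1 + a0*b1*c1),
    -10 * (a1*b0*c0 + a0*b1*c0 + a0*b0*c1), 60 * (a0*b0*c0)]

/-- The Hankel quadratic form. -/
noncomputable def qf (h : Fin 7 → ℂ) (v : Fin 4 → ℂ) : ℂ :=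
  h 0 * v 0 ^ 2 + 2 * h 1 * (v 0 * v 1) + h 2 * (v 1 ^ 2 + 2 * (v 0 * v 2))
  + 2 * h 3 * (v 0 * v 3 + v 1 * v 2) + h 4 * (v 2 ^ 2 + 2 * (v 1 * v 3))
  + 2 * h 5 * (v 2 * v 3) + h 6 * v 3 ^ 2

/-- The Hankel quadratic form as a polynomial. -/
noncomputable def qp (h : Fin 7 → ℂ) : MvPolynomial (Fin 4) ℂ :=
  C (h 0) * (X 0 * X 0) + C (2 * h 1) * (X 0 * X 1) + C (h 2) * (X 1 * X 1)
  + C (2 * h 2) * (X 0 * X 2)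
  + C (2 * h 3) * (X 0 * X 3) + C (2 * h 3) * (X 1 * X 2) + C (h 4) * (X 2 * X 2)
  + C (2 * h 4) * (X 1 * X 3)
  + C (2 * h 5) * (X 2 * X 3) + C (h 6) * (X 3 * X 3)

lemma eval_qp (h : Fin 7 → ℂ) (v : Fin 4 → ℂ) : eval v (qp h) = qf h v := by
  simp only [qp, qf, map_add, map_mul, eval_C, eval_X]; ring

lemma qp_hom (h : Fin 7 → ℂ) : (qp h).IsHomogeneous 2 := by
  have key : ∀ (c : ℂ) (i j : Fin 4),
      (C c * (X i * X j) : MvPolynomial (Fin 4) ℂ).IsHomogeneous 2 := fun c i j =>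
    ((isHomogeneous_X ℂ i).mul (isHomogeneous_X ℂ j)).C_mul c
  unfold qp
  repeat' apply IsHomogeneous.add
  all_goals exact key _ _ _

/-- Substitution on coefficients of cubics. -/
noncomputable def sub3 (g : Matrix (Fin 2) (Fin 2) ℂ) (v : Fin 4 → ℂ) : Fin 4 → ℂ :=
  let α := g 0 0
  let β := g 0 1
  let γ := g 1 0
  let δ := g 1 1
  ![v 0 * α^3 + v 1 * α^2 * γ + v 2 * α * γ^2 + v 3 * γ^3,
    v 0 * (3*α^2*β) + v 1 * (α^2*δ + 2*α*β*γ) + v 2 * (2*α*γ*δ + β*γ^2) + v 3 * (3*γ^2*δ),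
    v 0 * (3*α*β^2) + v 1 * (2*α*β*δ + β^2*γ) + v 2 * (α*δ^2 + 2*β*γ*δ) + v 3 * (3*γ*δ^2),
    v 0 * β^3 + v 1 * β^2 * δ + v 2 * β * δ^2 + v 3 * δ^3]

/-- Cubic with given coefficients. -/
noncomputable def mk3 (v : Fin 4 → ℂ) : MvPolynomial (Fin 2) ℂ :=
  C (v 0) * X 0 ^ 3 + C (v 1) * (X 0 ^ 2 * X 1) + C (v 2) * (X 0 * X 1 ^ 2) + C (v 3) * X 1 ^ 3

lemma mk3_eq (v : Fin 4 → ℂ) : mk3 v = ∑ i : Fin 4,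
    monomial (Finsupp.single (0 : Fin 2) (3 - (i : ℕ)) + Finsupp.single (1 : Fin 2) (i : ℕ))
      (v i) := by
  simp [mk3, Fin.sum_univ_four, monomial_eq, Finsupp.prod_fintype, Fin.prod_univ_two]

lemma coords_mk3 (v : Fin 4 → ℂ) : cubicCoords (mk3 v) = v := by
  funext i
  rw [mk3_eq]
  simp only [cubicCoords, coeff_sum, coeff_monomial]
  rw [Finset.sum_eq_single i]
  · simp
  · intro j _ hj
    rw [if_neg]
    intro h
    apply hj
    have := DFunLike.congr_fun h 1
    simp at this
    exact Fin.ext this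
  · simp

lemma mk3_coords (f : MvPolynomial (Fin 2) ℂ) (hf : f.IsHomogeneous 3) :
    mk3 (cubicCoords f) = f := by
  rw [mk3_eq]
  ext m
  simp only [coeff_sum, coeff_monomial]
  by_cases hm : m 0 + m 1 = 3
  · have h1 : m 1 < 4 := by omega
    have hm' : m = Finsupp.single (0 : Fin 2) (3 - m 1) + Finsupp.single (1 : Fin 2) (m 1) := by
      ext i
      fin_cases i
      · simp; omega
      · simp
    rw [Finset.sum_eq_single (⟨m 1, h1⟩ : Fin 4)]
    · simp only [cubicCoords]
      rw [← hm']; simp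
    · intro j _ hj
      rw [if_neg]
      intro h
      apply hj
      have := DFunLike.congr_fun h 1
      simp at this
      exact Fin.ext this
    · simp
  · rw [Finset.sum_eq_zero]
    · symm
      apply hf.coeff_eq_zero
      rw [Finsupp.degree_eq_sum, Fin.sum_univ_two]
      exact hm
    · intro j _
      rw [if_neg]
      rintro rfl
      apply hm
      simp
      omega

lemma coords_act (g : SpecialLinearGroup (Fin 2) ℂ) (f : MvPolynomial (Fin 2) ℂ)
    (hf : f.IsHomogeneous 3) :
    cubicCoords (cubicAct g⁻¹ f) = sub3 g.1 (cubicCoords f) := by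
  rw [← coords_mk3 (sub3 g.1 (cubicCoords f))]
  congr 1
  conv_lhs => rw [← mk3_coords f hf]
  generalize cubicCoords f = v
  simp only [cubicAct, mk3, sub3, inv_inv, map_add, map_mul, map_pow, aeval_C, aeval_X,
    Fin.sum_univ_two, algebraMap_eq]
  have e3 : (C 3 : MvPolynomial (Fin 2) ℂ) = 3 := map_ofNat C 3
  have e2 : (C 2 : MvPolynomial (Fin 2) ℂ) = 2 := map_ofNat C 2
  simp [e2, e3]
  ring

lemma act_hom (g : SpecialLinearGroup (Fin 2) ℂ) (f : MvPolynomial (Fin 2) ℂ)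
    (hf : f.IsHomogeneous 3) : (cubicAct g f).IsHomogeneous 3 := by
  have h := hf.aeval (n := 1) (fun i => ∑ j : Fin 2,
      MvPolynomial.C ((g⁻¹ : SpecialLinearGroup (Fin 2) ℂ) i j) * MvPolynomial.X j) (by
    intro i
    apply IsHomogeneous.sum
    intro j _
    exact (isHomogeneous_X ℂ j).C_mul _)
  simpa [cubicAct] using h

lemma sub3_mul (g h : Matrix (Fin 2) (Fin 2) ℂ) (v : Fin 4 → ℂ) :
    sub3 (g * h) v = sub3 h (sub3 g v) := by
  funext i
  fin_cases i <;> simp [sub3, Matrix.mul_apply, Fin.sum_univ_two] <;> ring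

lemma equivar (g A B C : Matrix (Fin 2) (Fin 2) ℂ) (v : Fin 4 → ℂ) :
    qf (hk A B C) (sub3 g v) =
      qf (hk (g * A * g.adjugate) (g * B * g.adjugate) (g * C * g.adjugate)) v := by
  simp [qf, hk, sub3, Matrix.mul_apply, Fin.sum_univ_two, Matrix.adjugate_fin_two]
  ring

lemma hk_swap1 (A B C : Matrix (Fin 2) (Fin 2) ℂ) : hk A B C = hk B A C := by
  funext i
  fin_cases i <;> simp [hk] <;> first | ring1 | (left; ring1)

lemma hk_swap2 (A B C : Matrix (Fin 2) (Fin 2) ℂ) : hk A B C = hk A C B := by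
  funext i
  fin_cases i <;> simp [hk] <;> ring

lemma hk_neg (A B C : Matrix (Fin 2) (Fin 2) ℂ) : hk (-A) B C = - hk A B C := by
  funext i
  fin_cases i <;> simp [hk] <;> ring

lemma qf_neg (h : Fin 7 → ℂ) (v) : qf (-h) v = - qf h v := by
  simp [qf]; ring
lemma frame (p q r s t u m n o : ℂ) (hA : p^2+q*r=-1) (hB : s^2+t*u=-1) (hAB : 2*p*s+q*u+r*t=0)
   (hm : m = p*s+q*u) (hn : n = p*t-q*s) (ho : o = r*s-p*u) :
   p^2+s^2+m^2=-1 ∧ q^2+t^2+n^2=0 ∧ r^2+u^2+o^2=0 ∧ p*q+s*t+m*n=0 ∧ p*r+s*u+m*o=0 ∧ q*r+t*u+n*o=-2 := by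
  subst hm hn ho
  refine ⟨?_,?_,?_,?_,?_,?_⟩ <;> grind
lemma frame2 (p q r s t u m n o : ℂ) (hA : p^2+q*r=-1) (hB : s^2+t*u=-1) (hAB : 2*p*s+q*u+r*t=0)
   (hm : m = p*s+q*u) (hn : n = p*t-q*s) (ho : o = r*s-p*u) :
   m^2+n*o=-1 ∧ 2*p*m+q*o+r*n=0 ∧ 2*s*m+t*o+u*n=0 := by
  subst hm hn ho
  refine ⟨?_,?_,?_⟩ <;> grind
set_option maxHeartbeats 4000000 in
lemma rel0 (p q r s t u m n o : ℂ) (hA : p^2+q*r=-1) (hB : s^2+t*u=-1) (hAB : 2*p*s+q*u+r*t=0)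
   (k1 : m^2+n*o=-1) (k2 : 2*p*m+q*o+r*n=0) (k3 : 2*s*m+t*o+u*n=0)
   (f1 : p^2+s^2+m^2=-1) (f2 : q^2+t^2+n^2=0) (f3 : r^2+u^2+o^2=0) (f4 : p*q+s*t+m*n=0) (f5 : p*r+s*u+m*o=0)
   (f6 : q*r+t*u+n*o=-2) : (60*((-q)*(-t)*(-n)))*(4*(r*u*(-n) + r*(-2*s)*(-2*m) + r*(-t)*o + (-2*p)*u*(-2*m) + (-2*p)*(-2*s)*o + (-q)*u*o))-4*(-10*((-2*p)*(-t)*(-n) + (-q)*(-2*s)*(-n) + (-q)*(-t)*(-2*m)))*(-3*(r*(-2*s)*(-n) + r*(-t)*(-2*m) + (-2*p)*u*(-n) + (-2*p)*(-2*s)*(-2*m) + (-2*p)*(-t)*o + (-q)*u*(-2*m) + (-q)*(-2*s)*o))+3*(4*(r*(-t)*(-n) + (-2*p)*(-2*s)*(-n) + (-2*p)*(-t)*(-2*m) + (-q)*u*(-n) + (-q)*(-2*s)*(-2*m) + (-q)*(-t)*o))^2=0 := by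
  grind

set_option maxHeartbeats 4000000 in
lemma rel1 (p q r s t u m n o : ℂ) (hA : p^2+q*r=-1) (hB : s^2+t*u=-1) (hAB : 2*p*s+q*u+r*t=0)
   (k1 : m^2+n*o=-1) (k2 : 2*p*m+q*o+r*n=0) (k3 : 2*s*m+t*o+u*n=0)
   (f1 : p^2+s^2+m^2=-1) (f2 : q^2+t^2+n^2=0) (f3 : r^2+u^2+o^2=0) (f4 : p*q+s*t+m*n=0) (f5 : p*r+s*u+m*o=0)
   (f6 : q*r+t*u+n*o=-2) : (60*((-q)*(-t)*(-n)))*(-10*(r*u*(-2*m) + r*(-2*s)*o + (-2*p)*u*o))-3*(-10*((-2*p)*(-t)*(-n) + (-q)*(-2*s)*(-n) + (-q)*(-t)*(-2*m)))*(4*(r*u*(-n) + r*(-2*s)*(-2*m) + r*(-t)*o + (-2*p)*u*(-2*m) + (-2*p)*(-2*s)*o + (-q)*u*o))+2*(4*(r*(-t)*(-n) + (-2*p)*(-2*s)*(-n) + (-2*p)*(-t)*(-2*m) + (-q)*u*(-n) + (-q)*(-2*s)*(-2*m) + (-q)*(-t)*o))*(-3*(r*(-2*s)*(-n) + r*(-t)*(-2*m)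 + (-2*p)*u*(-n) + (-2*p)*(-2*s)*(-2*m) + (-2*p)*(-t)*o + (-q)*u*(-2*m) + (-q)*(-2*s)*o))=0 := by
  grind

set_option maxHeartbeats 4000000 in
lemma rel2 (p q r s t u m n o : ℂ) (hA : p^2+q*r=-1) (hB : s^2+t*u=-1) (hAB : 2*p*s+q*u+r*t=0)
   (k1 : m^2+n*o=-1) (k2 : 2*p*m+q*o+r*n=0) (k3 : 2*s*m+t*o+u*n=0)
   (f1 : p^2+s^2+m^2=-1) (f2 : q^2+t^2+n^2=0) (f3 : r^2+u^2+o^2=0) (f4 : p*q+s*t+m*n=0) (f5 : p*r+s*u+m*o=0)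
   (f6 : q*r+t*u+n*o=-2) : (60*((-q)*(-t)*(-n)))*(60*(r*u*o))-9*(4*(r*(-t)*(-n) + (-2*p)*(-2*s)*(-n) + (-2*p)*(-t)*(-2*m) + (-q)*u*(-n) + (-q)*(-2*s)*(-2*m) + (-q)*(-t)*o))*(4*(r*u*(-n) + r*(-2*s)*(-2*m) + r*(-t)*o + (-2*p)*u*(-2*m) + (-2*p)*(-2*s)*o + (-q)*u*o))+8*(-3*(r*(-2*s)*(-n) + r*(-t)*(-2*m) + (-2*p)*u*(-n) + (-2*p)*(-2*s)*(-2*m) + (-2*p)*(-t)*o + (-q)*u*(-2*m) + (-q)*(-2*s)*o))^2=0 := by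
  grind

set_option maxHeartbeats 4000000 in
lemma rel3 (p q r s t u m n o : ℂ) (hA : p^2+q*r=-1) (hB : s^2+t*u=-1) (hAB : 2*p*s+q*u+r*t=0)
   (k1 : m^2+n*o=-1) (k2 : 2*p*m+q*o+r*n=0) (k3 : 2*s*m+t*o+u*n=0)
   (f1 : p^2+s^2+m^2=-1) (f2 : q^2+t^2+n^2=0) (f3 : r^2+u^2+o^2=0) (f4 : p*q+s*t+m*n=0) (f5 : p*r+s*u+m*o=0)
   (f6 : q*r+t*u+n*o=-2) : (-10*((-2*p)*(-t)*(-n) + (-q)*(-2*s)*(-n) + (-q)*(-t)*(-2*m)))*(60*(r*u*o))-3*(4*(r*(-t)*(-n) + (-2*p)*(-2*s)*(-n) + (-2*p)*(-t)*(-2*m) + (-q)*u*(-n) + (-q)*(-2*s)*(-2*m) + (-q)*(-t)*o))*(-10*(r*u*(-2*m) + r*(-2*s)*o + (-2*p)*u*o))+2*(-3*(r*(-2*s)*(-n) + r*(-t)*(-2*m) + (-2*p)*u*(-n) + (-2*p)*(-2*s)*(-2*m) + (-2*p)*(-t)*o + (-q)*u*(-2*m) + (-q)*(-2*s)*o))*(4*(r*u*(-n)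 + r*(-2*s)*(-2*m) + r*(-t)*o + (-2*p)*u*(-2*m) + (-2*p)*(-2*s)*o + (-q)*u*o))=0 := by
  grind

set_option maxHeartbeats 4000000 in
lemma rel4 (p q r s t u m n o : ℂ) (hA : p^2+q*r=-1) (hB : s^2+t*u=-1) (hAB : 2*p*s+q*u+r*t=0)
   (k1 : m^2+n*o=-1) (k2 : 2*p*m+q*o+r*n=0) (k3 : 2*s*m+t*o+u*n=0)
   (f1 : p^2+s^2+m^2=-1) (f2 : q^2+t^2+n^2=0) (f3 : r^2+u^2+o^2=0) (f4 : p*q+s*t+m*n=0) (f5 : p*r+s*u+m*o=0)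
   (f6 : q*r+t*u+n*o=-2) : (4*(r*(-t)*(-n) + (-2*p)*(-2*s)*(-n) + (-2*p)*(-t)*(-2*m) + (-q)*u*(-n) + (-q)*(-2*s)*(-2*m) + (-q)*(-t)*o))*(60*(r*u*o))-4*(-3*(r*(-2*s)*(-n) + r*(-t)*(-2*m) + (-2*p)*u*(-n) + (-2*p)*(-2*s)*(-2*m) + (-2*p)*(-t)*o + (-q)*u*(-2*m) + (-q)*(-2*s)*o))*(-10*(r*u*(-2*m) + r*(-2*s)*o + (-2*p)*u*o))+3*(4*(r*u*(-n) + r*(-2*s)*(-2*m) + r*(-t)*o + (-2*p)*u*(-2*m) + (-2*p)*(-2*s)*o + (-q)*u*o))^2=0 := by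
  grind

set_option maxHeartbeats 4000000 in
lemma rel5 (p q r s t u m n o : ℂ) (hA : p^2+q*r=-1) (hB : s^2+t*u=-1) (hAB : 2*p*s+q*u+r*t=0)
   (k1 : m^2+n*o=-1) (k2 : 2*p*m+q*o+r*n=0) (k3 : 2*s*m+t*o+u*n=0)
   (f1 : p^2+s^2+m^2=-1) (f2 : q^2+t^2+n^2=0) (f3 : r^2+u^2+o^2=0) (f4 : p*q+s*t+m*n=0) (f5 : p*r+s*u+m*o=0)
   (f6 : q*r+t*u+n*o=-2) : (60*(r*u*o))*(60*((-q)*(-t)*(-n)))-3*(-10*(r*u*(-2*m) + r*(-2*s)*o + (-2*p)*u*o))*(-10*((-2*p)*(-t)*(-n) + (-q)*(-2*s)*(-n) + (-q)*(-t)*(-2*m)))+3*(4*(r*u*(-n) + r*(-2*s)*(-2*m) + r*(-t)*o + (-2*p)*u*(-2*m) + (-2*p)*(-2*s)*o + (-q)*u*o))*(4*(r*(-t)*(-n) + (-2*p)*(-2*s)*(-n) + (-2*p)*(-t)*(-2*m) + (-q)*u*(-n) + (-q)*(-2*s)*(-2*m) + (-q)*(-t)*o))-(-3*(r*(-2*s)*(-n)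 + r*(-t)*(-2*m) + (-2*p)*u*(-n) + (-2*p)*(-2*s)*(-2*m) + (-2*p)*(-t)*o + (-q)*u*(-2*m) + (-q)*(-2*s)*o))^2=1200 := by
  grind


lemma lin_alg (h0 h1 h2 h3 h4 h5 h6 v0 v1 v2 v3 : ℂ)
    (r0 : h0*h4-4*h1*h3+3*h2^2=0) (r1 : h0*h5-3*h1*h4+2*h2*h3=0) (r2 : h0*h6-9*h2*h4+8*h3^2=0)
    (r3 : h1*h6-3*h2*h5+2*h3*h4=0) (r4 : h2*h6-4*h3*h5+3*h4^2=0)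
    (r5 : h6*h0-3*h5*h1+3*h4*h2-h3^2=1200)
    (E0 : h0*v0+h1*v1+h2*v2+h3*v3=0) (E1 : h1*v0+h2*v1+h3*v2+h4*v3=0)
    (E2 : h2*v0+h3*v1+h4*v2+h5*v3=0) (E3 : h3*v0+h4*v1+h5*v2+h6*v3=0) :
    v0 = 0 ∧ v1 = 0 ∧ v2 = 0 ∧ v3 = 0 := by
  refine ⟨?_, ?_, ?_, ?_⟩
  · have : 1200 * v0 = 0 := by
      linear_combination h6*E0-3*h5*E1+3*h4*E2-h3*E3 - r5*v0 - r3*v1 - r4*v2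
    simpa using this
  · have : 1200 * v1 = 0 := by
      linear_combination -3*(h5*E0-3*h4*E1+3*h3*E2-h2*E3) - r5*v1 + 3*r1*v0 - 3*r4*v3 + r2*v1
    simpa using this
  · have : 1200 * v2 = 0 := by
      linear_combination 3*(h4*E0-3*h3*E1+3*h2*E2-h1*E3) - r5*v2 - 3*r0*v0 + 3*r3*v3 + r2*v2
    simpa using this
  · have : 1200 * v3 = 0 := by
      linear_combination -(h3*E0-3*h2*E1+3*h1*E2-h0*E3) - r5*v3 - r0*v1 - r1*v2
    simpa using this

lemma lin_E (h : Fin 7 → ℂ) (v : Fin 4 → ℂ) (H : ∀ w, qf h (v + w) = qf h v + qf h w) :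
    (h 0*v 0+h 1*v 1+h 2*v 2+h 3*v 3=0) ∧ (h 1*v 0+h 2*v 1+h 3*v 2+h 4*v 3=0) ∧
    (h 2*v 0+h 3*v 1+h 4*v 2+h 5*v 3=0) ∧ (h 3*v 0+h 4*v 1+h 5*v 2+h 6*v 3=0) := by
  have H0 := H ![1,0,0,0]
  have H1 := H ![0,1,0,0]
  have H2 := H ![0,0,1,0]
  have H3 := H ![0,0,0,1]
  simp [qf] at H0 H1 H2 H3
  refine ⟨?_, ?_, ?_, ?_⟩
  · linear_combination H0 / 2
  · linear_combination H1 / 2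
  · linear_combination H2 / 2
  · linear_combination H3 / 2

lemma nondeg (A B : Matrix (Fin 2) (Fin 2) ℂ) (dA : A.det = 1) (dB : B.det = 1)
    (tA : A 1 1 = - A 0 0) (tB : B 1 1 = - B 0 0) (tC : (A * B) 1 1 = - (A * B) 0 0)
    (v : Fin 4 → ℂ)
    (H : ∀ w, qf (hk A B (A * B)) (v + w) = qf (hk A B (A * B)) v + qf (hk A B (A * B)) w) :
    v = 0 := by
  obtain ⟨E0, E1, E2, E3⟩ := lin_E _ _ H
  have cs : (A * B) 0 0 = A 0 0 * B 0 0 + A 0 1 * B 1 0 := by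
    simp [Matrix.mul_apply, Fin.sum_univ_two]
  have ct : (A * B) 0 1 = A 0 0 * B 0 1 - A 0 1 * B 0 0 := by
    simp [Matrix.mul_apply, Fin.sum_univ_two, tB]; ring
  have cu : (A * B) 1 0 = A 1 0 * B 0 0 - A 0 0 * B 1 0 := by
    simp [Matrix.mul_apply, Fin.sum_univ_two, tA]; ring
  have cv : (A * B) 1 1 = A 1 0 * B 0 1 + A 0 0 * B 0 0 := by
    simp [Matrix.mul_apply, Fin.sum_univ_two, tA, tB]
  rw [Matrix.det_fin_two, tA] at dA
  rw [Matrix.det_fin_two, tB] at dB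
  have hA : A 0 0 ^ 2 + A 0 1 * A 1 0 = -1 := by linear_combination -dA
  have hB : B 0 0 ^ 2 + B 0 1 * B 1 0 = -1 := by linear_combination -dB
  have hAB : 2 * A 0 0 * B 0 0 + A 0 1 * B 1 0 + A 1 0 * B 0 1 = 0 := by
    linear_combination tC - cs - cv
  obtain ⟨f1, f2, f3, f4, f5, f6⟩ := frame _ _ _ _ _ _ _ _ _ hA hB hAB cs ct cu
  obtain ⟨k1, k2, k3⟩ := frame2 _ _ _ _ _ _ _ _ _ hA hB hAB cs ct cu
  have R0 := rel0 _ _ _ _ _ _ _ _ _ hA hB hAB k1 k2 k3 f1 f2 f3 f4 f5 f6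
  have R1 := rel1 _ _ _ _ _ _ _ _ _ hA hB hAB k1 k2 k3 f1 f2 f3 f4 f5 f6
  have R2 := rel2 _ _ _ _ _ _ _ _ _ hA hB hAB k1 k2 k3 f1 f2 f3 f4 f5 f6
  have R3 := rel3 _ _ _ _ _ _ _ _ _ hA hB hAB k1 k2 k3 f1 f2 f3 f4 f5 f6
  have R4 := rel4 _ _ _ _ _ _ _ _ _ hA hB hAB k1 k2 k3 f1 f2 f3 f4 f5 f6
  have R5 := rel5 _ _ _ _ _ _ _ _ _ hA hB hAB k1 k2 k3 f1 f2 f3 f4 f5 f6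
  have T := lin_alg _ _ _ _ _ _ _ _ _ _ _
    (by rw [← R0]; simp [hk, tA, tB, tC]; ring) (by rw [← R1]; simp [hk, tA, tB, tC]; ring)
    (by rw [← R2]; simp [hk, tA, tB, tC]; ring) (by rw [← R3]; simp [hk, tA, tB, tC]; ring)
    (by rw [← R4]; simp [hk, tA, tB, tC]; ring) (by rw [← R5]; simp [hk, tA, tB, tC]; ring)
    E0 E1 E2 E3
  obtain ⟨a, b, c, d⟩ := T
  funext i
  fin_cases i <;> simpa

lemma trace_zero (x : SpecialLinearGroup (Fin 2) ℂ) (h1 : x ≠ 1) (h2 : x ≠ -1)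
    (h : x * x = 1 ∨ x * x = -1) : x.1 1 1 = - x.1 0 0 := by
  have hd := x.2
  rw [Matrix.det_fin_two] at hd
  by_contra ht
  have ht' : x.1 1 1 + x.1 0 0 ≠ 0 := fun h => ht (by linear_combination h)
  have hm : ∃ e : ℂ, (e = 1 ∨ e = -1) ∧ x.1 * x.1 = e • (1 : Matrix (Fin 2) (Fin 2) ℂ) := by
    rcases h with h | h
    · exact ⟨1, Or.inl rfl, by simpa using congrArg Subtype.val h⟩
    · exact ⟨-1, Or.inr rfl, by simpa using congrArg Subtype.val h⟩
  obtain ⟨e, he, hm⟩ := hm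
  have e00 := congrFun (congrFun hm 0) 0
  have e01 := congrFun (congrFun hm 0) 1
  have e10 := congrFun (congrFun hm 1) 0
  have e11 := congrFun (congrFun hm 1) 1
  simp [Matrix.mul_apply, Fin.sum_univ_two] at e00 e01 e10 e11
  have z01 : x.1 0 1 = 0 := by
    apply (mul_eq_zero.1 (_ : (x.1 1 1 + x.1 0 0) * x.1 0 1 = 0)).resolve_left ht'
    linear_combination e01
  have z10 : x.1 1 0 = 0 := by
    apply (mul_eq_zero.1 (_ : (x.1 1 1 + x.1 0 0) * x.1 1 0 = 0)).resolve_left ht'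
    linear_combination e10
  have zd : x.1 0 0 = x.1 1 1 := by
    have : (x.1 1 1 + x.1 0 0) * (x.1 0 0 - x.1 1 1) = 0 := by linear_combination e00 - e11
    exact sub_eq_zero.1 ((mul_eq_zero.1 this).resolve_left ht')
  have hs : x.1 1 1 = 1 ∨ x.1 1 1 = -1 := by
    rw [z01, zd] at hd
    refine mul_self_eq_one_iff.1 ?_
    linear_combination hd
  rcases hs with hs | hs
  · apply h1
    ext i j
    fin_cases i <;> fin_cases j <;> simp [z01, z10, zd, hs]
  · apply h2
    ext i j
    fin_cases i <;> fin_cases j <;> simp [z01, z10, zd, hs]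

lemma perm_conj : ∀ σ a b : Equiv.Perm (Fin 4),
    a = Equiv.swap 0 1 * Equiv.swap 2 3 → b = Equiv.swap 0 2 * Equiv.swap 1 3 →
    (σ * a * σ⁻¹ = a ∧ σ * b * σ⁻¹ = b ∧ σ * (a * b) * σ⁻¹ = a * b) ∨
    (σ * a * σ⁻¹ = a ∧ σ * b * σ⁻¹ = a * b ∧ σ * (a * b) * σ⁻¹ = b) ∨
    (σ * a * σ⁻¹ = b ∧ σ * b * σ⁻¹ = a ∧ σ * (a * b) * σ⁻¹ = a * b) ∨
    (σ * a * σ⁻¹ = b ∧ σ * b * σ⁻¹ = a * b ∧ σ * (a * b) * σ⁻¹ = a) ∨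
    (σ * a * σ⁻¹ = a * b ∧ σ * b * σ⁻¹ = a ∧ σ * (a * b) * σ⁻¹ = b) ∨
    (σ * a * σ⁻¹ = a * b ∧ σ * b * σ⁻¹ = b ∧ σ * (a * b) * σ⁻¹ = a) := by
  rintro σ a b rfl rfl
  revert σ
  decide

lemma hk_neg2 (A B C : Matrix (Fin 2) (Fin 2) ℂ) : hk A (-B) C = - hk A B C := by
  rw [hk_swap1, hk_neg, hk_swap1]

lemma hk_neg3 (A B C : Matrix (Fin 2) (Fin 2) ℂ) : hk A B (-C) = - hk A B C := by
  rw [hk_swap2, hk_neg2, hk_swap2]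

lemma hk_signs {A B C A' B' C' : Matrix (Fin 2) (Fin 2) ℂ} (hA : A' = A ∨ A' = -A)
    (hB : B' = B ∨ B' = -B) (hC : C' = C ∨ C' = -C) :
    hk A' B' C' = hk A B C ∨ hk A' B' C' = - hk A B C := by
  rcases hA with rfl | rfl <;> rcases hB with rfl | rfl <;> rcases hC with rfl | rfl <;>
    simp [hk_neg, hk_neg2, hk_neg3]

theorem main_aux (G : Subgroup (SpecialLinearGroup (Fin 2) ℂ))
    (ψ : G →* Equiv.Perm (Fin 4))
    (hker : ∀ g : G, ψ g = 1 ↔ ((g : SpecialLinearGroup (Fin 2) ℂ) = 1 ∨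
          (g : SpecialLinearGroup (Fin 2) ℂ) = -1))
    (A B : G) (hA : ψ A = Equiv.swap 0 1 * Equiv.swap 2 3)
    (hB : ψ B = Equiv.swap 0 2 * Equiv.swap 1 3) :
    ∃ Q : MvPolynomial (Fin 4) ℂ, Q ≠ 0 ∧ Q.IsHomogeneous 2 ∧
      (∃ χ : G →* ℂˣ, ∀ (g : G) (f : MvPolynomial (Fin 2) ℂ), f.IsHomogeneous 3 →
        MvPolynomial.eval
            (cubicCoords (cubicAct ((g : SpecialLinearGroup (Fin 2) ℂ))⁻¹ f)) Q
          = (χ g : ℂ) * MvPolynomial.eval (cubicCoords f) Q) ∧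
      (∀ v : Fin 4 → ℂ,
        (∀ w : Fin 4 → ℂ,
          MvPolynomial.eval (v + w) Q = MvPolynomial.eval v Q + MvPolynomial.eval w Q) →
        v = 0) := by
  -- trace zero for elements mapping to involutions
  have htr : ∀ x : G, ψ x ≠ 1 → ψ x * ψ x = 1 → x.1.1 1 1 = - x.1.1 0 0 := by
    intro x h1 h2
    have hx := (hker x).not.1 h1
    push Not at hx
    apply trace_zero x.1 hx.1 hx.2
    rw [← map_mul, hker] at h2
    simpa using h2
  have tA := htr A (by rw [hA]; decide) (by rw [hA]; decide)
  have tB := htr B (by rw [hB]; decide) (by rw [hB]; decide)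
  have tC := htr (A * B) (by rw [map_mul, hA, hB]; decide) (by rw [map_mul, hA, hB]; decide)
  -- equality up to sign
  have hsg : ∀ x y : G, ψ x = ψ y → x.1.1 = y.1.1 ∨ x.1.1 = - y.1.1 := by
    intro x y h
    have : ψ (x * y⁻¹) = 1 := by rw [map_mul, map_inv, h, mul_inv_cancel]
    rw [hker] at this
    rcases this with h | h
    · left
      have h' : x.1 = y.1 := by
        have : x.1 * y.1⁻¹ = 1 := by simpa using h
        exact mul_inv_eq_one.1 this
      rw [h']
    · right
      have h' : x.1 = -y.1 := by
        have : x.1 * y.1⁻¹ = -1 := by simpa using h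
        rw [mul_inv_eq_iff_eq_mul] at this
        simpa using this
      rw [h']; simp
  set h := hk A.1.1 B.1.1 (A * B).1.1 with hh
  have hnd : ∀ v : Fin 4 → ℂ, (∀ w, qf h (v + w) = qf h v + qf h w) → v = 0 := by
    intro v hv
    exact nondeg A.1.1 B.1.1 A.1.2 B.1.2 tA tB (by simpa using tC) v (by simpa [hh] using hv)
  have hconj : ∀ (g x y : G), ψ g * ψ x * (ψ g)⁻¹ = ψ y →
      g.1.1 * x.1.1 * g.1.1.adjugate = y.1.1 ∨ g.1.1 * x.1.1 * g.1.1.adjugate = - y.1.1 := by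
    intro g x y hxy
    have := hsg (g * x * g⁻¹) y (by simpa using hxy)
    simpa [SpecialLinearGroup.coe_inv] using this
  have hsemi : ∀ g : G, ∃ e : ℂˣ, ∀ v, qf h (sub3 g.1.1 v) = e * qf h v := by
    intro g
    suffices hs : hk (g.1.1 * A.1.1 * g.1.1.adjugate) (g.1.1 * B.1.1 * g.1.1.adjugate)
        (g.1.1 * (A * B).1.1 * g.1.1.adjugate) = h ∨
        hk (g.1.1 * A.1.1 * g.1.1.adjugate) (g.1.1 * B.1.1 * g.1.1.adjugate)
        (g.1.1 * (A * B).1.1 * g.1.1.adjugate) = -h by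
      rcases hs with hs | hs
      · exact ⟨1, fun v => by rw [hh, equivar, hs]; simp [hh]⟩
      · exact ⟨-1, fun v => by rw [hh, equivar, hs, qf_neg]; simp [hh]⟩
    have hp := perm_conj (ψ g) (ψ A) (ψ B) hA hB
    simp only [← map_mul ψ A B] at hp
    rcases hp with ⟨a, b, c⟩ | ⟨a, b, c⟩ | ⟨a, b, c⟩ | ⟨a, b, c⟩ | ⟨a, b, c⟩ | ⟨a, b, c⟩ <;>
      have T := hk_signs (hconj _ _ _ a) (hconj _ _ _ b) (hconj _ _ _ c)
    · exact T
    · rwa [hk_swap2 A.1.1 (A * B).1.1] at T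
    · rwa [hk_swap1 B.1.1 A.1.1] at T
    · rwa [hk_swap2 B.1.1 (A * B).1.1, hk_swap1 B.1.1 A.1.1] at T
    · rwa [hk_swap1 (A * B).1.1 A.1.1, hk_swap2 A.1.1 (A * B).1.1] at T
    · rwa [hk_swap1 (A * B).1.1 B.1.1, hk_swap2 B.1.1 (A * B).1.1, hk_swap1 B.1.1 A.1.1] at T
  choose e he using hsemi
  have hne : ∃ v, qf h v ≠ 0 := by
    by_contra hcon
    push Not at hcon
    have := hnd (fun _ => 1) (fun w => by simp [hcon])
    simpa using congrFun this 0
  obtain ⟨v0, hv0⟩ := hne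
  refine ⟨qp h, ?_, qp_hom h, ⟨MonoidHom.mk' e ?_, ?_⟩, ?_⟩
  · intro h0
    apply hv0
    rw [← eval_qp, h0, map_zero]
  · intro a b
    ext
    apply mul_right_cancel₀ hv0
    rw [← he]
    have : (a * b).1.1 = a.1.1 * b.1.1 := by simp
    rw [this, sub3_mul, he, he]
    push_cast
    ring
  · intro g f hf
    rw [coords_act _ _ hf, eval_qp, eval_qp, he]
    rfl
  · intro v hv
    apply hnd
    simpa only [eval_qp] using hv

/-- For a binary tetrahedral or binary octahedral group `G ≤ SL(2, ℂ)`
(so `G/{±1} ≅ A₄` or `G/{±1} ≅ S₄`), the induced 4-dimensional representation on `Sym³(ℂ²)`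
has a nonzero nondegenerate semi-invariant quadratic form; i.e. the induced projective action
on `ℙ³` leaves a smooth quadric surface invariant. -/
theorem stmt_7 (G : Subgroup (SpecialLinearGroup (Fin 2) ℂ)) (hGfin : Finite G)
    (hA4S4 : (∃ φ : G →* alternatingGroup (Fin 4), Function.Surjective φ ∧
        ∀ g : G, φ g = 1 ↔ ((g : SpecialLinearGroup (Fin 2) ℂ) = 1 ∨
          (g : SpecialLinearGroup (Fin 2) ℂ) = -1)) ∨
      (∃ φ : G →* Equiv.Perm (Fin 4), Function.Surjective φ ∧
        ∀ g : G, φ g = 1 ↔ ((g : SpecialLinearGroup (Fin 2) ℂ) = 1 ∨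
          (g : SpecialLinearGroup (Fin 2) ℂ) = -1))) :
    ∃ Q : MvPolynomial (Fin 4) ℂ, Q ≠ 0 ∧ Q.IsHomogeneous 2 ∧
      (∃ χ : G →* ℂˣ, ∀ (g : G) (f : MvPolynomial (Fin 2) ℂ), f.IsHomogeneous 3 →
        MvPolynomial.eval
            (cubicCoords (cubicAct ((g : SpecialLinearGroup (Fin 2) ℂ))⁻¹ f)) Q
          = (χ g : ℂ) * MvPolynomial.eval (cubicCoords f) Q) ∧
      (∀ v : Fin 4 → ℂ,
        (∀ w : Fin 4 → ℂ,
          MvPolynomial.eval (v + w) Q = MvPolynomial.eval v Q + MvPolynomial.eval w Q) →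
        v = 0) := by
  rcases hA4S4 with ⟨φ, hs, hk⟩ | ⟨φ, hs, hk⟩
  · obtain ⟨A, hA⟩ := hs ⟨Equiv.swap 0 1 * Equiv.swap 2 3, by
      rw [Equiv.Perm.mem_alternatingGroup]; decide⟩
    obtain ⟨B, hB⟩ := hs ⟨Equiv.swap 0 2 * Equiv.swap 1 3, by
      rw [Equiv.Perm.mem_alternatingGroup]; decide⟩
    refine main_aux G ((alternatingGroup (Fin 4)).subtype.comp φ) ?_ A B ?_ ?_
    · intro g
      rw [← hk]
      simp
    · simp [hA]
    · simp [hB]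
  · obtain ⟨A, hA⟩ := hs (Equiv.swap 0 1 * Equiv.swap 2 3)
    obtain ⟨B, hB⟩ := hs (Equiv.swap 0 2 * Equiv.swap 1 3)
    exact main_aux G φ hk A B hA hB
end

section
/- Let G be a finite subgroup of SL(4,ℂ) acting irreducibly on ℂ⁴ and having no nonzero semi-invariant homogeneous polynomial of degree 2. Let C = {[s³ : s²t : st² : t³] : (s,t) ∈ ℂ² ∖ {0}} ⊂ ℙ³(ℂ) be the twisted cubic curve, and suppose the action of Ḡ (the image of G in PGL(4,ℂ)) on ℙ³(ℂ) maps C onto itself. Then Ḡ is isomorphic to the alternating group A₅. -/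
open Matrix

/-- The twisted cubic curve in `ℙ³(ℂ)`, the image of `(s : t) ↦ (s³ : s²t : st² : t³)`. -/
def twistedCubic : Set (Projectivization ℂ (Fin 4 → ℂ)) :=
  {p | ∃ (s t : ℂ) (h : (![s ^ 3, s ^ 2 * t, s * t ^ 2, t ^ 3] : Fin 4 → ℂ) ≠ 0),
    p = Projectivization.mk ℂ (![s ^ 3, s ^ 2 * t, s * t ^ 2, t ^ 3]) h}



section GeomPart
open Polynomial

/-- the Veronese map -/
def nuTC (v : Fin 2 → ℂ) : Fin 4 → ℂ := ![v 0 ^ 3, v 0 ^ 2 * v 1, v 0 * v 1 ^ 2, v 1 ^ 3]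

lemma nuTC_ne_zero {v : Fin 2 → ℂ} (hv : v ≠ 0) : nuTC v ≠ 0 := by
  intro h
  apply hv
  have h0 := congrFun h 0
  have h3 := congrFun h 3
  simp [nuTC] at h0 h3
  ext i; fin_cases i <;> simpa

lemma nuTC_smul (c : ℂ) (v : Fin 2 → ℂ) : nuTC (c • v) = c ^ 3 • nuTC v := by
  ext i; fin_cases i <;> simp [nuTC] <;> ring

lemma nuTC_prop {v w : Fin 2 → ℂ} {k : ℂ} (h : nuTC v = k • nuTC w) :
    v 0 * w 1 - v 1 * w 0 = 0 := by
  have h0 := congrFun h 0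
  have h1 := congrFun h 1
  have h2 := congrFun h 2
  have h3 := congrFun h 3
  simp [nuTC] at h0 h1 h2 h3
  have : (v 0 * w 1 - v 1 * w 0) ^ 3 = 0 := by
    linear_combination w 1 ^ 3 * h0 - 3 * w 0 * w 1 ^ 2 * h1 + 3 * w 0 ^ 2 * w 1 * h2 - w 0 ^ 3 * h3
  exact pow_eq_zero_iff (by norm_num) |>.mp this

lemma nuTC_span {A B : Matrix (Fin 4) (Fin 4) ℂ} (h : ∀ v, A *ᵥ nuTC v = B *ᵥ nuTC v) : A = B := by
  ext i j
  have h0 := congrFun (h ![1, 0]) i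
  have h1 := congrFun (h ![0, 1]) i
  have h2 := congrFun (h ![1, 1]) i
  have h3 := congrFun (h ![1, -1]) i
  simp [nuTC, Matrix.mulVec, dotProduct, Fin.sum_univ_four] at h0 h1 h2 h3
  fin_cases j <;> simp
  · exact h0
  · linear_combination (h2 - h3) / 2 - h1
  · linear_combination (h2 + h3) / 2 - h0
  · exact h1

lemma mulVec_nuTC (g : Matrix (Fin 4) (Fin 4) ℂ) (v : Fin 2 → ℂ) (i : Fin 4) :
    (g *ᵥ nuTC v) i = g i 0 * v 0 ^ 3 + g i 1 * (v 0 ^ 2 * v 1) + g i 2 * (v 0 * v 1 ^ 2)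
      + g i 3 * v 1 ^ 3 := by
  simp [nuTC, Matrix.mulVec, dotProduct, Fin.sum_univ_four]

lemma lift_aux (g : Matrix (Fin 4) (Fin 4) ℂ) (hg : ∀ x, g *ᵥ x = 0 → x = 0)
    (hcone : ∀ v, ∃ (a : ℂ) (w : Fin 2 → ℂ), g *ᵥ nuTC v = a • nuTC w) :
    ∃ α β γ δ : ℂ, ∀ v, g *ᵥ nuTC v = nuTC ![α * v 0 + β * v 1, γ * v 0 + δ * v 1] := by
  classical
  let P : Fin 4 → ℂ[X] := fun i =>
    C (g i 0) * X ^ 3 + C (g i 1) * X ^ 2 + C (g i 2) * X + C (g i 3)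
  have hP : ∀ i s, (P i).eval s = (g *ᵥ nuTC ![s, 1]) i := by
    intro i s; rw [mulVec_nuTC]; simp [P]
  have hdeg : ∀ i, (P i).natDegree ≤ 3 := fun i => natDegree_cubic_le
  have r1 : P 1 ^ 2 = P 0 * P 2 := by
    refine Polynomial.funext fun s => ?_
    obtain ⟨a, w, h⟩ := hcone ![s, 1]
    simp only [eval_mul, eval_pow, hP, h]
    simp [nuTC]; ring
  have r2 : P 0 * P 3 = P 1 * P 2 := by
    refine Polynomial.funext fun s => ?_
    obtain ⟨a, w, h⟩ := hcone ![s, 1]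
    simp only [eval_mul, hP, h]
    simp [nuTC]; ring
  have hcommon : ∀ s, ¬ ∀ i, (P i).eval s = 0 := by
    intro s h
    have : g *ᵥ nuTC ![s, 1] = 0 := by
      ext i; rw [← hP, h i]; rfl
    have := congrFun (hg _ this) 3
    simp [nuTC] at this
  have hP0 : P 0 ≠ 0 := by
    intro h0
    have h0' : ∀ j, g 0 j = 0 := by
      intro j
      have c0 := congrArg (fun p => coeff p 0) h0
      have c1 := congrArg (fun p => coeff p 1) h0
      have c2 := congrArg (fun p => coeff p 2) h0
      have c3 := congrArg (fun p => coeff p 3) h0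
      simp [P, coeff_X, coeff_C] at c0 c1 c2 c3
      fin_cases j <;> assumption
    have hdet : g.det = 0 := Matrix.det_eq_zero_of_row_eq_zero 0 h0'
    obtain ⟨x, hx, hx'⟩ := Matrix.exists_mulVec_eq_zero_iff.mpr hdet
    exact hx (hg x hx')
  obtain ⟨d, a, b, hcop, e0, e1⟩ : ∃ d a b : ℂ[X], IsCoprime a b ∧ P 0 = d * a ∧ P 1 = d * b := by
    have hne : EuclideanDomain.gcd (P 0) (P 1) ≠ 0 := by
      intro h; exact hP0 (EuclideanDomain.gcd_eq_zero_iff.mp h).1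
    obtain ⟨a, ha⟩ := EuclideanDomain.gcd_dvd_left (P 0) (P 1)
    obtain ⟨b, hb⟩ := EuclideanDomain.gcd_dvd_right (P 0) (P 1)
    refine ⟨_, a, b, ?_, ha, hb⟩
    have hbez := EuclideanDomain.gcd_eq_gcd_ab (P 0) (P 1)
    generalize EuclideanDomain.gcdA (P 0) (P 1) = x at hbez
    generalize EuclideanDomain.gcdB (P 0) (P 1) = y at hbez
    generalize EuclideanDomain.gcd (P 0) (P 1) = d at *
    refine ⟨x, y, mul_left_cancel₀ hne ?_⟩
    rw [ha, hb] at hbez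
    linear_combination -hbez
  have hd0 : d ≠ 0 := by rintro rfl; simp at e0; exact hP0 e0
  have ha0 : a ≠ 0 := by rintro rfl; simp at e0; exact hP0 e0
  have s1 : d * b ^ 2 = a * P 2 := by
    apply mul_left_cancel₀ hd0
    rw [e0, e1] at r1
    linear_combination r1
  obtain ⟨e, rfl⟩ : a ∣ d := (hcop.pow_right (n := 2)).dvd_of_dvd_mul_right ⟨_, s1⟩
  have he0 : e ≠ 0 := by rintro rfl; simp at hd0
  have e2 : P 2 = e * b ^ 2 := by
    apply mul_left_cancel₀ ha0
    linear_combination -s1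
  have s2 : e * b ^ 3 = a * P 3 := by
    apply mul_left_cancel₀ (mul_ne_zero ha0 he0)
    rw [e0, e1, e2] at r2
    linear_combination -r2
  obtain ⟨k, rfl⟩ : a ∣ e := (hcop.pow_right (n := 3)).dvd_of_dvd_mul_right ⟨_, s2⟩
  have hk0 : k ≠ 0 := by rintro rfl; simp at he0
  have e3 : P 3 = k * b ^ 3 := by
    apply mul_left_cancel₀ ha0
    linear_combination -s2
  have hkdeg : k.degree = 0 := by
    by_contra h
    obtain ⟨s, hs⟩ := IsAlgClosed.exists_root k h
    have hs : k.eval s = 0 := hs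
    refine hcommon s fun i => ?_
    fin_cases i
    · change (P 0).eval s = 0; rw [e0]; simp [hs]
    · change (P 1).eval s = 0; rw [e1]; simp [hs]
    · change (P 2).eval s = 0; rw [e2]; simp [hs]
    · change (P 3).eval s = 0; rw [e3]; simp [hs]
  obtain ⟨κ, rfl⟩ : ∃ κ, k = C κ := ⟨_, eq_C_of_degree_eq_zero hkdeg⟩
  have hκ : κ ≠ 0 := by rintro rfl; simp at hk0
  have hcube : ∀ (p q : ℂ[X]), q = C κ * p ^ 3 → q.natDegree ≤ 3 → p.natDegree ≤ 1 := by
    intro p q h h3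
    rw [h, natDegree_C_mul hκ, natDegree_pow] at h3
    omega
  have hda := hcube a (P 0) (by rw [e0]; ring) (hdeg 0)
  have hdb := hcube b (P 3) e3 (hdeg 3)
  obtain ⟨α, β, rfl⟩ := exists_eq_X_add_C_of_natDegree_le_one hda
  obtain ⟨γ, δ, rfl⟩ := exists_eq_X_add_C_of_natDegree_le_one hdb
  obtain ⟨c, hc⟩ := IsAlgClosed.exists_pow_nat_eq κ (n := 3) (by norm_num)
  refine ⟨c * α, c * β, c * γ, c * δ, fun v => ?_⟩
  have hh : ∀ s : ℂ, ∀ i, (P i).eval s =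
      nuTC ![c * α * s + c * β, c * γ * s + c * δ] i := by
    intro s i
    fin_cases i
    · change (P 0).eval s = _; rw [e0]; simp [nuTC, ← hc]; ring
    · change (P 1).eval s = _; rw [e1]; simp [nuTC, ← hc]; ring
    · change (P 2).eval s = _; rw [e2]; simp [nuTC, ← hc]; ring
    · change (P 3).eval s = _; rw [e3]; simp [nuTC, ← hc]; ring
  ext i
  rw [mulVec_nuTC]
  have E0 := hh 0 i
  have E1 := hh 1 i
  have Em := hh (-1) i
  have E2 := hh 2 i
  simp only [P, eval_add, eval_mul, eval_C, eval_pow, eval_X] at E0 E1 Em E2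
  clear hh
  have key : ∀ (j : Fin 4) (r3 r2 r1 r0 : ℂ),
      g j 0 * 0 ^ 3 + g j 1 * 0 ^ 2 + g j 2 * 0 + g j 3 = r0 →
      g j 0 * 1 ^ 3 + g j 1 * 1 ^ 2 + g j 2 * 1 + g j 3 = r3 + r2 + r1 + r0 →
      g j 0 * (-1) ^ 3 + g j 1 * (-1) ^ 2 + g j 2 * (-1) + g j 3 = -r3 + r2 - r1 + r0 →
      g j 0 * 2 ^ 3 + g j 1 * 2 ^ 2 + g j 2 * 2 + g j 3 = 8 * r3 + 4 * r2 + 2 * r1 + r0 →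
      g j 0 = r3 ∧ g j 1 = r2 ∧ g j 2 = r1 ∧ g j 3 = r0 := by
    intro j r3 r2 r1 r0 E0 E1 Em E2
    have f0 : g j 3 = r0 := by linear_combination E0
    have f2 : g j 1 = r2 := by linear_combination (E1 + Em) / 2 - E0
    have f3 : g j 0 = r3 := by
      linear_combination (E2 - 4 * f2 - f0 - (E1 - Em)) / 6
    refine ⟨f3, f2, ?_, f0⟩
    linear_combination (E1 - Em) / 2 - f3
  set A := c * α
  set B := c * β
  set G' := c * γ
  set D := c * δ
  fin_cases i
  · simp [nuTC] at E0 E1 Em E2 ⊢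
    obtain ⟨f3, f2, f1, f0⟩ := key 0 (A ^ 3) (3 * A ^ 2 * B) (3 * A * B ^ 2) (B ^ 3)
      (by linear_combination E0) (by linear_combination E1) (by linear_combination Em)
      (by linear_combination E2)
    rw [f3, f2, f1, f0]; ring
  · simp [nuTC] at E0 E1 Em E2 ⊢
    obtain ⟨f3, f2, f1, f0⟩ := key 1 (A ^ 2 * G') (2 * A * B * G' + A ^ 2 * D)
      (B ^ 2 * G' + 2 * A * B * D) (B ^ 2 * D)
      (by linear_combination E0) (by linear_combination E1) (by linear_combination Em)
      (by linear_combination E2)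
    rw [f3, f2, f1, f0]; ring
  · simp [nuTC] at E0 E1 Em E2 ⊢
    obtain ⟨f3, f2, f1, f0⟩ := key 2 (G' ^ 2 * A) (2 * G' * D * A + G' ^ 2 * B)
      (D ^ 2 * A + 2 * G' * D * B) (D ^ 2 * B)
      (by linear_combination E0) (by linear_combination E1) (by linear_combination Em)
      (by linear_combination E2)
    rw [f3, f2, f1, f0]; ring
  · simp [nuTC] at E0 E1 Em E2 ⊢
    obtain ⟨f3, f2, f1, f0⟩ := key 3 (G' ^ 3) (3 * G' ^ 2 * D) (3 * G' * D ^ 2) (D ^ 3)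
      (by linear_combination E0) (by linear_combination E1) (by linear_combination Em)
      (by linear_combination E2)
    rw [f3, f2, f1, f0]; ring

lemma lift_exists (g : Matrix (Fin 4) (Fin 4) ℂ) (hg : ∀ x, g *ᵥ x = 0 → x = 0)
    (hcone : ∀ v, ∃ (a : ℂ) (w : Fin 2 → ℂ), g *ᵥ nuTC v = a • nuTC w) :
    ∃ A : (Fin 2 → ℂ) ≃ₗ[ℂ] (Fin 2 → ℂ), ∀ v, g *ᵥ nuTC v = nuTC (A v) := by
  obtain ⟨α, β, γ, δ, h⟩ := lift_aux g hg hcone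
  let f : (Fin 2 → ℂ) →ₗ[ℂ] (Fin 2 → ℂ) := Matrix.toLin' !![α, β; γ, δ]
  have hf : ∀ v, f v = ![α * v 0 + β * v 1, γ * v 0 + δ * v 1] := by
    intro v
    ext i; fin_cases i <;> simp [f, Matrix.mulVec, dotProduct, Fin.sum_univ_two]
  have hinj : Function.Injective f := by
    rw [← LinearMap.ker_eq_bot, LinearMap.ker_eq_bot']
    intro v hv
    by_contra hne
    apply nuTC_ne_zero hne
    apply hg
    rw [h v, ← hf, hv]
    ext i; fin_cases i <;> simp [nuTC]
  refine ⟨LinearEquiv.ofInjectiveEndo f hinj, fun v => ?_⟩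
  rw [h v, ← hf]; rfl

end GeomPart

section FixPart

lemma scalar_of_trivial (A : (Fin 2 → ℂ) ≃ₗ[ℂ] (Fin 2 → ℂ))
    (h : ∀ p : Projectivization ℂ (Fin 2 → ℂ), A • p = p) : ∃ c : ℂ, ∀ v, A v = c • v := by
  have h' : ∀ v : Fin 2 → ℂ, v ≠ 0 → ∃ c : ℂ, c • v = A v := by
    intro v hv
    have := h (Projectivization.mk ℂ v hv)
    rw [Projectivization.smul_mk, Projectivization.mk_eq_mk_iff'] at this
    exact this
  obtain ⟨a, ha⟩ := h' ![1, 0] (fun h => by simpa using congrFun h 0)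
  obtain ⟨b, hb⟩ := h' ![0, 1] (fun h => by simpa using congrFun h 1)
  obtain ⟨c, hc⟩ := h' ![1, 1] (fun h => by simpa using congrFun h 0)
  have hdec : ∀ v : Fin 2 → ℂ, A v = v 0 • a • ![1, 0] + v 1 • b • ![0, 1] := by
    intro v
    rw [ha, hb, ← map_smul, ← map_smul, ← map_add]
    congr 1
    ext i; fin_cases i <;> simp
  have h1 := hdec ![1, 1]
  rw [← hc] at h1
  have h10 := congrFun h1 0
  have h11 := congrFun h1 1
  simp at h10 h11
  refine ⟨c, fun v => ?_⟩
  rw [hdec v]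
  ext i; fin_cases i <;> simp [← h10, ← h11, mul_comm]

lemma trivial_of_scalar (A : (Fin 2 → ℂ) ≃ₗ[ℂ] (Fin 2 → ℂ)) (c : ℂ) (h : ∀ v, A v = c • v)
    (p : Projectivization ℂ (Fin 2 → ℂ)) : A • p = p := by
  induction p using Projectivization.ind with
  | h v hv =>
    rw [Projectivization.smul_mk, Projectivization.mk_eq_mk_iff']
    exact ⟨c, (h v).symm⟩

lemma fixed_two (A : (Fin 2 → ℂ) ≃ₗ[ℂ] (Fin 2 → ℂ)) (n : ℕ) (hn : n ≠ 0)
    (hA : ∀ p : Projectivization ℂ (Fin 2 → ℂ), (A ^ n) • p = p)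
    (hne : ¬ ∀ p : Projectivization ℂ (Fin 2 → ℂ), A • p = p) :
    {p : Projectivization ℂ (Fin 2 → ℂ) | A • p = p}.ncard = 2 := by
  obtain ⟨c, hc⟩ := scalar_of_trivial _ hA
  let f : Module.End ℂ (Fin 2 → ℂ) := A.toLinearMap
  have hfA : ∀ v, f v = A v := fun v => rfl
  have hpow : ∀ m : ℕ, ∀ v, (f ^ m) v = (A ^ m) v := by
    intro m
    induction m with
    | zero => intro v; simp
    | succ m ih => intro v; rw [pow_succ, pow_succ]; simp [ih, hfA]
  have hc0 : c ≠ 0 := by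
    rintro rfl
    have h1 := hc ![1, 0]
    rw [zero_smul, LinearEquiv.map_eq_zero_iff] at h1
    simpa using congrFun h1 0
  have hss : f.IsSemisimple := by
    refine Module.End.isSemisimple_of_squarefree_aeval_eq_zero
      (p := (Polynomial.X ^ n - Polynomial.C c)) ?_ ?_
    · exact (Polynomial.separable_X_pow_sub_C c (by exact_mod_cast hn) hc0).squarefree
    · refine LinearMap.ext fun v => ?_
      simp [hpow, hc, Module.algebraMap_end_apply]
  have htop := hss.iSup_eigenspace_eq_top
  obtain ⟨l, hl⟩ := Module.End.exists_eigenvalue f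
  obtain ⟨m, hml, hm⟩ : ∃ m, m ≠ l ∧ f.HasEigenvalue m := by
    by_contra hcon
    push Not at hcon
    apply hne
    have hle : (⊤ : Submodule ℂ (Fin 2 → ℂ)) ≤ f.eigenspace l := by
      rw [← htop]
      refine iSup_le fun m => ?_
      by_cases hm : m = l
      · rw [hm]
      · have := hcon m hm
        rw [Module.End.hasEigenvalue_iff, not_not] at this
        rw [this]; exact bot_le
    exact trivial_of_scalar A l fun v => Module.End.mem_eigenspace_iff.mp (hle trivial)
  obtain ⟨v, hv⟩ := hl.exists_hasEigenvector
  obtain ⟨w, hw⟩ := hm.exists_hasEigenvector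
  have hAv : A v = l • v := hv.apply_eq_smul
  have hAw : A w = m • w := hw.apply_eq_smul
  have hli : LinearIndependent ℂ ![v, w] := by
    rw [LinearIndependent.pair_iff' hv.2]
    intro a ha
    have h1 : A w = l • w := by rw [← ha, map_smul, hAv, smul_comm]
    rw [hAw] at h1
    have h2 : (m - l) • w = 0 := by rw [sub_smul, h1, sub_self]
    rcases smul_eq_zero.mp h2 with h | h
    · exact hml (sub_eq_zero.mp h)
    · exact hw.2 h
  have hspan := hli.span_eq_top_of_card_eq_finrank (by simp)
  have hset : {p : Projectivization ℂ (Fin 2 → ℂ) | A • p = p} =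
      {Projectivization.mk ℂ v hv.2, Projectivization.mk ℂ w hw.2} := by
    ext p
    induction p using Projectivization.ind with
    | h u hu =>
    simp only [Set.mem_ofPred_eq, Set.mem_insert_iff, Set.mem_singleton_iff,
      Projectivization.smul_mk, Projectivization.mk_eq_mk_iff']
    have hu' : u ∈ Submodule.span ℂ (Set.range ![v, w]) := by rw [hspan]; trivial
    rw [Matrix.range_cons, Matrix.range_cons, Matrix.range_empty, Set.union_empty,
      Set.singleton_union, Submodule.mem_span_pair] at hu'
    obtain ⟨a, b, rfl⟩ := hu'
    constructor
    · rintro ⟨k, hk⟩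
      have hk : k • (a • v + b • w) = A (a • v + b • w) := hk
      rw [map_add, map_smul, map_smul, hAv, hAw] at hk
      have hz : (a * (k - l)) • v + (b * (k - m)) • w = 0 := by
        have := sub_eq_zero.mpr hk
        rw [← this]; module
      obtain ⟨z1, z2⟩ := LinearIndependent.pair_iff.mp hli _ _ hz
      rcases mul_eq_zero.mp z1 with h | h
      · right; exact ⟨b, by simp [h]⟩
      · rcases mul_eq_zero.mp z2 with h' | h'
        · left; exact ⟨a, by simp [h']⟩
        · exact absurd ((sub_eq_zero.mp h').symm.trans (sub_eq_zero.mp h)) hml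
    · rintro (⟨k, hk⟩ | ⟨k, hk⟩)
      · refine ⟨l, ?_⟩
        change _ = A (a • v + b • w)
        rw [← hk, map_smul, hAv, smul_comm]
      · refine ⟨m, ?_⟩
        change _ = A (a • v + b • w)
        rw [← hk, map_smul, hAw, smul_comm]
  rw [hset, Set.ncard_pair]
  rw [Ne, Projectivization.mk_eq_mk_iff']
  rintro ⟨a, ha⟩
  have := LinearIndependent.pair_iff.mp hli 1 (-a) (by simp [ha])
  simp at this

end FixPart

section GroupPart
open MulAction

lemma num_aux (N o1 o2 o3 n1 n2 n3 : ℕ) (h1 : o1 * n1 = N) (h2 : o2 * n2 = N) (h3 : o3 * n3 = N)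
    (hn1 : 2 ≤ n1) (h12 : n1 ≤ n2) (h23 : n2 ≤ n3) (hs : o1 + o2 + o3 = N + 2)
    (p3 : 3 ≤ o3) (q1 : o1 ≠ 6) (q3 : o3 ≠ 6) :
    N = 60 ∧ n1 = 2 ∧ n2 = 3 ∧ n3 = 5 := by
  have e1 : n1 = 2 := by
    by_contra h
    have : 3 ≤ n1 := by omega
    have a1 : o1 * 3 ≤ N := by rw [← h1]; gcongr
    have a2 : o2 * 3 ≤ N := by rw [← h2]; gcongr; omega
    have a3 : o3 * 3 ≤ N := by rw [← h3]; gcongr; omega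
    omega
  subst e1
  have e2 : n2 = 3 := by
    by_contra h
    by_cases h' : n2 = 2
    · subst h'; omega
    have a2 : o2 * 4 ≤ N := by rw [← h2]; gcongr; omega
    have a3 : o3 * 4 ≤ N := by rw [← h3]; gcongr; omega
    omega
  subst e2
  have : n3 < 6 := by
    by_contra h
    have a3 : o3 * 6 ≤ N := by rw [← h3]; gcongr; omega
    omega
  interval_cases n3 <;> omega

lemma num_aux2 (N : ℕ) (o n : Fin 3 → ℕ) (h : ∀ i, o i * n i = N) (hn : ∀ i, 2 ≤ n i)
    (hs : ∑ i, o i = N + 2) (p : ∀ i, 3 ≤ o i) (q : ∀ i, o i ≠ 6) :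
    N = 60 ∧ (∀ i, n i = 2 ∨ n i = 3 ∨ n i = 5) ∧ Function.Injective n := by
  have key : ∀ a b c : Fin 3, (∑ i, o i = o a + o b + o c) → n a ≤ n b → n b ≤ n c →
      N = 60 ∧ n a = 2 ∧ n b = 3 ∧ n c = 5 := by
    intro a b c hsum hab hbc
    exact num_aux N _ _ _ _ _ _ (h a) (h b) (h c) (hn a) hab hbc (by omega) (p c)
      (q a) (q c)
  have fin : ∀ a b c : Fin 3, (∀ i, i = a ∨ i = b ∨ i = c) →
      (N = 60 ∧ n a = 2 ∧ n b = 3 ∧ n c = 5) →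
      N = 60 ∧ (∀ i, n i = 2 ∨ n i = 3 ∨ n i = 5) ∧ Function.Injective n := by
    rintro a b c hall ⟨h0, h1, h2, h3⟩
    refine ⟨h0, fun i => ?_, fun i j hij => ?_⟩
    · rcases hall i with rfl | rfl | rfl <;> omega
    · rcases hall i with rfl | rfl | rfl <;> rcases hall j with rfl | rfl | rfl <;>
        first | rfl | omega
  have hs' := Fin.sum_univ_three o
  rcases le_total (n 0) (n 1) with h01 | h01 <;> rcases le_total (n 1) (n 2) with h12 | h12 <;>
    rcases le_total (n 0) (n 2) with h02 | h02
  · exact fin 0 1 2 (by decide) (key 0 1 2 (by omega) h01 h12)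
  · exact fin 0 1 2 (by decide) (key 0 1 2 (by omega) h01 h12)
  · exact fin 0 2 1 (by decide) (key 0 2 1 (by omega) h02 h12)
  · exact fin 2 0 1 (by decide) (key 2 0 1 (by omega) h02 h01)
  · exact fin 1 0 2 (by decide) (key 1 0 2 (by omega) h01 h02)
  · exact fin 1 2 0 (by decide) (key 1 2 0 (by omega) h12 h02)
  · exact fin 2 1 0 (by decide) (key 2 1 0 (by omega) h12 h01)
  · exact fin 2 1 0 (by decide) (key 2 1 0 (by omega) h12 h01)

lemma orb_stab {H X : Type*} [Group H] [MulAction H X] (x : X) :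
    (orbit H x).ncard * Nat.card (stabilizer H x) = Nat.card H := by
  rw [← index_stabilizer, Subgroup.index_mul_card]

/-- orbit-stabilizer for conjugation by a subgroup -/
lemma card_conj_orbit {H : Type*} [Group H] [Finite H] (N : Subgroup H) (t : H) :
    Nat.card N = (Set.range (fun n : N => (n : H) * t * (n : H)⁻¹)).ncard *
      Nat.card (N ⊓ Subgroup.centralizer {t} : Subgroup H) := by
  let _ : MulAction N H := MulAction.compHom H ((MulAut.conj (G := H)).comp N.subtype)
  have hsm : ∀ (n : N) (x : H), n • x = (n : H) * x * (n : H)⁻¹ := fun n x => rfl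
  have h1 := orb_stab (H := N) t
  have h2 : MulAction.orbit N t = Set.range (fun n : N => (n : H) * t * (n : H)⁻¹) := rfl
  have h3 : Nat.card (MulAction.stabilizer N t) =
      Nat.card (N ⊓ Subgroup.centralizer {t} : Subgroup H) := by
    refine Nat.card_congr ⟨fun n => ⟨n.1, n.1.2, ?_⟩, fun n => ⟨⟨n.1, n.2.1⟩, ?_⟩,
      fun _ => rfl, fun _ => rfl⟩
    · have := n.2
      rw [MulAction.mem_stabilizer_iff, hsm, mul_inv_eq_iff_eq_mul] at this
      exact Subgroup.mem_centralizer_singleton_iff.mpr this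
    · have := Subgroup.mem_centralizer_singleton_iff.mp n.2.2
      rw [MulAction.mem_stabilizer_iff, hsm, mul_inv_eq_iff_eq_mul]
      exact this
  rw [← h2, ← h3, ← h1]

lemma eq_of_card_two {H : Type*} [Group H] (S : Subgroup H) (h : Nat.card S = 2) {a b : H}
    (ha : a ∈ S) (hb : b ∈ S) (ha1 : a ≠ 1) (hb1 : b ≠ 1) : a = b := by
  rw [Nat.card_eq_two_iff' (1 : S)] at h
  obtain ⟨c, hc, hu⟩ := h
  have e1 := hu ⟨a, ha⟩ (by simpa [Subtype.ext_iff] using ha1)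
  have e2 := hu ⟨b, hb⟩ (by simpa [Subtype.ext_iff] using hb1)
  simpa using e1.trans e2.symm

section
variable {H X : Type*} [Group H] [MulAction H X]

lemma conj_mem_stab (k t : H) (x : X) (h : t ∈ stabilizer H x) :
    k * t * k⁻¹ ∈ stabilizer H (k • x) := by
  rw [mem_stabilizer_iff] at *
  simp [mul_smul, h]

variable [Finite H]

lemma centralizer_card_le (h2 : ∀ h : H, h ≠ 1 → (fixedBy X h).ncard = 2)
    (t : H) (ht : t ≠ 1) (x : X) (hx : t ∈ stabilizer H x) :
    Nat.card (Subgroup.centralizer {t}) ≤ 2 * Nat.card (stabilizer H x) := by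
  have h1 := orb_stab (H := Subgroup.centralizer {t}) x
  rw [← h1]
  have hsub : orbit (Subgroup.centralizer {t}) x ⊆ fixedBy X t := by
    rintro _ ⟨c, rfl⟩
    have hc := Subgroup.mem_centralizer_singleton_iff.mp c.2
    change t • ((c : H) • x) = (c : H) • x
    rw [← mul_smul, ← hc, mul_smul, mem_stabilizer_iff.mp hx]
  have hfin : (fixedBy X t).Finite := Set.finite_of_ncard_ne_zero (by rw [h2 t ht]; norm_num)
  refine Nat.mul_le_mul ?_ ?_
  · rw [← h2 t ht]
    exact Set.ncard_le_ncard hsub hfin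
  · refine Nat.card_le_card_of_injective
      (fun c => (⟨c.1.1, c.2⟩ : stabilizer H x)) ?_
    intro a b hab
    have hab' := congrArg Subtype.val hab
    exact Subtype.ext (Subtype.ext hab')


lemma centralizer_card_eq (h2 : ∀ h : H, h ≠ 1 → (fixedBy X h).ncard = 2)
    (t : H) (ht : t ≠ 1) (x : X) (hx : t ∈ stabilizer H x) (hc : Nat.card (stabilizer H x) = 2)
    (hst : ∀ y ∈ fixedBy X t, Nat.card (stabilizer H y) = 2 ∧ y ∈ orbit H x) :
    Nat.card (Subgroup.centralizer {t}) = 4 := by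
  have h1 := orb_stab (H := Subgroup.centralizer {t}) x
  have hsub : fixedBy X t ⊆ orbit (Subgroup.centralizer {t}) x := by
    intro y hy
    obtain ⟨hy2, k, hk⟩ := hst y hy
    have hk' : k • x = y := hk
    have hty : t ∈ stabilizer H y := hy
    have := eq_of_card_two _ hy2 (hk' ▸ conj_mem_stab k t x hx) hty (by simpa using ht) ht
    rw [mul_inv_eq_iff_eq_mul] at this
    exact ⟨⟨k, Subgroup.mem_centralizer_singleton_iff.mpr this⟩, hk⟩
  have hfin : (orbit (Subgroup.centralizer {t}) x).Finite := Set.finite_range _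
  have a1 : 2 ≤ (orbit (Subgroup.centralizer {t}) x).ncard := by
    rw [← h2 t ht]
    exact Set.ncard_le_ncard hsub hfin
  have a2 : 2 ≤ Nat.card (stabilizer (Subgroup.centralizer {t}) x) := by
    rw [← hc]
    refine Nat.card_le_card_of_injective
      (fun c => (⟨⟨c.1, ?_⟩, c.2⟩ : stabilizer (Subgroup.centralizer {t}) x)) ?_
    · rw [Subgroup.mem_centralizer_singleton_iff]
      by_cases h : (c : H) = 1
      · simp [h]
      · rw [eq_of_card_two _ hc c.2 hx h ht]
    · intro a b hab
      have hab' := congrArg Subtype.val (congrArg Subtype.val hab)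
      exact Subtype.ext hab'
  have a3 := centralizer_card_le h2 t ht x hx
  have := Nat.mul_le_mul a1 a2
  omega

lemma A5_of_action (h2 : ∀ h : H, h ≠ 1 → (fixedBy X h).ncard = 2) (h60 : Nat.card H = 60)
    (hst : ∀ x : X, stabilizer H x = ⊥ ∨ Nat.card (stabilizer H x) = 2 ∨
      Nat.card (stabilizer H x) = 3 ∨ Nat.card (stabilizer H x) = 5)
    (hconj : ∀ x y : X, Nat.card (stabilizer H x) = Nat.card (stabilizer H y) →
      stabilizer H x ≠ ⊥ → y ∈ orbit H x) :
    Nonempty (H ≃* alternatingGroup (Fin 5)) := by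
  classical
  -- every nontrivial element fixes a point whose stabilizer has order equal to that of the element
  have hfix : ∀ h : H, h ≠ 1 → ∃ x : X, h ∈ stabilizer H x := by
    intro h hh
    have := h2 h hh
    obtain ⟨x, hx⟩ := Set.nonempty_of_ncard_ne_zero (s := fixedBy X h) (by omega)
    exact ⟨x, hx⟩
  have hord : ∀ (h : H) (x : X), h ≠ 1 → h ∈ stabilizer H x →
      orderOf h = Nat.card (stabilizer H x) ∧
      (Nat.card (stabilizer H x) = 2 ∨ Nat.card (stabilizer H x) = 3 ∨
        Nat.card (stabilizer H x) = 5) := by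
    intro h x hh hx
    have h3 : Nat.card (stabilizer H x) = 2 ∨ Nat.card (stabilizer H x) = 3 ∨
        Nat.card (stabilizer H x) = 5 := by
      rcases hst x with h' | h'
      · rw [h'] at hx; exact absurd (Subgroup.mem_bot.mp hx) hh
      · exact h'
    refine ⟨?_, h3⟩
    have hp : (Nat.card (stabilizer H x)).Prime := by
      rcases h3 with h | h | h <;> rw [h] <;> norm_num
    have hd : orderOf h ∣ Nat.card (stabilizer H x) := Subgroup.orderOf_dvd_natCard _ hx
    rcases (Nat.dvd_prime hp).mp hd with h' | h'
    · exact absurd (orderOf_eq_one_iff.mp h') hh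
    · exact h'
  have hne : ∀ (h : H) (x : X), h ≠ 1 → h ∈ stabilizer H x → stabilizer H x ≠ ⊥ := by
    intro h x hh hx h'
    rw [h'] at hx; exact hh (Subgroup.mem_bot.mp hx)
  have hn1 : ∀ h : H, orderOf h = 2 → h ≠ 1 := by
    rintro h h2 rfl; simp at h2
  have hcent : ∀ t : H, orderOf t = 2 → Nat.card (Subgroup.centralizer {t}) = 4 := by
    intro t ht
    have ht1 := hn1 t ht
    obtain ⟨x, hx⟩ := hfix t ht1
    have hxc : Nat.card (stabilizer H x) = 2 := by rw [← (hord t x ht1 hx).1, ht]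
    refine centralizer_card_eq h2 t ht1 x hx hxc fun y hy => ?_
    have hyc : Nat.card (stabilizer H y) = 2 := by rw [← (hord t y ht1 hy).1, ht]
    exact ⟨hyc, hconj x y (by rw [hxc, hyc]) (hne t x ht1 hx)⟩
  have hinv : ∀ s t : H, orderOf s = 2 → orderOf t = 2 → ∃ k, k * s * k⁻¹ = t := by
    intro s t hs ht
    have hs1 := hn1 s hs
    have ht1 := hn1 t ht
    obtain ⟨x, hx⟩ := hfix s hs1
    obtain ⟨y, hy⟩ := hfix t ht1
    have hxc : Nat.card (stabilizer H x) = 2 := by rw [← (hord s x hs1 hx).1, hs]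
    have hyc : Nat.card (stabilizer H y) = 2 := by rw [← (hord t y ht1 hy).1, ht]
    obtain ⟨k, hk⟩ := hconj x y (by rw [hxc, hyc]) (hne s x hs1 hx)
    have hk' : k • x = y := hk
    exact ⟨k, eq_of_card_two _ hyc (hk' ▸ conj_mem_stab k s x hx) hy (by simpa using hs1) ht1⟩
  have : Fact (Nat.Prime 2) := ⟨Nat.prime_two⟩
  obtain ⟨t, ht⟩ := exists_prime_orderOf_dvd_card' (G := H) 2 (by rw [h60]; norm_num)
  set K := Subgroup.centralizer {t} with hK
  have hK4 : Nat.card K = 4 := hcent t ht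
  have hcomm : ∀ a ∈ K, ∀ b ∈ K, a * b = b * a := by
    intro a ha b hb
    have hmc := IsPGroup.isMulCommutative_of_card_eq_prime_sq (p := 2) (G := K)
      (by rw [hK4]; norm_num)
    have := hmc.is_comm.comm ⟨a, ha⟩ ⟨b, hb⟩
    simpa [Subtype.ext_iff] using this
  have hK2 : ∀ s ∈ K, s ≠ 1 → orderOf s = 2 := by
    intro s hs hs1
    obtain ⟨x, hx⟩ := hfix s hs1
    obtain ⟨e, h3⟩ := hord s x hs1 hx
    have hd : orderOf s ∣ 4 := hK4 ▸ Subgroup.orderOf_dvd_natCard _ hs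
    rcases h3 with h | h | h <;> rw [e, h] at hd <;> omega
  have hKc : ∀ s ∈ K, s ≠ 1 → K = Subgroup.centralizer {s} := by
    intro s hs hs1
    refine Subgroup.eq_of_le_of_card_ge ?_ ?_
    · intro a ha
      exact Subgroup.mem_centralizer_singleton_iff.mpr (hcomm a ha s hs)
    · rw [hcent s (hK2 s hs hs1), hK4]
  have htK : t ∈ K := Subgroup.mem_centralizer_singleton_iff.mpr rfl
  have ht1 := hn1 t ht
  set N := Subgroup.normalizer (K : Set H) with hN
  have hNK : N ⊓ Subgroup.centralizer {t} = K :=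
    inf_eq_right.mpr Subgroup.le_normalizer
  have hrange : Set.range (fun n : N => (n : H) * t * (n : H)⁻¹) = (K : Set H) \ {1} := by
    ext s
    constructor
    · rintro ⟨n, rfl⟩
      refine ⟨(Subgroup.mem_normalizer_iff.mp n.2 t).mp htK, ?_⟩
      simpa using ht1
    · rintro ⟨hs, hs1⟩
      have hs1 : s ≠ 1 := hs1
      obtain ⟨k, hk⟩ := hinv t s ht (hK2 s hs hs1)
      refine ⟨⟨k, ?_⟩, hk⟩
      rw [Subgroup.mem_normalizer_iff]
      intro h
      have e := hKc s hs hs1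
      conv_rhs => rw [e, ← hk]
      rw [hK, Subgroup.mem_centralizer_singleton_iff,
        Subgroup.mem_centralizer_singleton_iff]
      constructor
      · intro h'
        calc k * h * k⁻¹ * (k * t * k⁻¹) = k * (h * t) * k⁻¹ := by group
          _ = _ := by rw [h']; group
      · intro h'
        have : k * (h * t) * k⁻¹ = k * (t * h) * k⁻¹ := by
          calc _ = k * h * k⁻¹ * (k * t * k⁻¹) := by group
            _ = _ := by rw [h']; group
        simpa using this
  have hN12 : Nat.card N = 12 := by
    rw [card_conj_orbit N t, hNK, hrange, hK4, Set.ncard_sdiff_singleton_of_mem K.one_mem]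
    have : (K : Set H).ncard = 4 := hK4
    rw [this]
  have hNi : N.index = 5 := by
    have := N.card_mul_index
    rw [hN12, h60] at this; omega
  -- kernel
  have hcls : ∀ k ∈ N.normalCore, k ≠ 1 →
      60 / Nat.card (Subgroup.centralizer {k}) + 1 ≤ Nat.card N.normalCore := by
    intro k hk hk1
    have h1 := card_conj_orbit (⊤ : Subgroup H) k
    rw [top_inf_eq, Subgroup.card_top, h60] at h1
    rw [h1, Nat.mul_div_cancel _ Nat.card_pos]
    have hn : (1 : H) ∉ Set.range (fun n : (⊤ : Subgroup H) => (n : H) * k * (n : H)⁻¹) := by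
      rintro ⟨n, hn⟩
      exact hk1 (by simpa using hn)
    rw [← Set.ncard_insert_of_notMem hn]
    refine Set.ncard_le_ncard (t := (N.normalCore : Set H)) ?_ (Set.toFinite _)
    rintro _ (rfl | ⟨n, rfl⟩)
    · exact N.normalCore.one_mem
    · exact (Subgroup.normalCore_normal N).conj_mem k hk _
  have hcoredvd : Nat.card N.normalCore ∣ 12 := by
    rw [← hN12]; exact Subgroup.card_dvd_of_le (Subgroup.normalCore_le N)
  have hcorele := Nat.le_of_dvd (by norm_num) hcoredvd
  have hno2 : ∀ k ∈ N.normalCore, orderOf k ≠ 2 := by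
    intro k hk hk2
    have := hcls k hk (hn1 k hk2)
    rw [hcent k hk2] at this
    omega
  have hcore : N.normalCore = ⊥ := by
    rw [Subgroup.eq_bot_iff_forall]
    intro k hk
    by_contra hk1
    obtain ⟨x, hx⟩ := hfix k hk1
    obtain ⟨e, h3⟩ := hord k x hk1 hx
    have hd : orderOf k ∣ 12 := (Subgroup.orderOf_dvd_natCard _ hk).trans hcoredvd
    rcases h3 with h | h | h
    · exact hno2 k hk (by rw [e, h])
    · have hle := centralizer_card_le h2 k hk1 x hx
      rw [h] at hle
      have hpos : 0 < Nat.card (Subgroup.centralizer {k}) := Nat.card_pos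
      have h10 : 60 / 6 ≤ 60 / Nat.card (Subgroup.centralizer {k}) :=
        Nat.div_le_div_left hle hpos
      have := hcls k hk hk1
      have h12 : Nat.card N.normalCore = 12 := by
        have : 11 ≤ Nat.card N.normalCore := by omega
        interval_cases hq : Nat.card N.normalCore
        · norm_num at hcoredvd
        · rfl
      obtain ⟨s, hs⟩ := exists_prime_orderOf_dvd_card' (G := N.normalCore) 2
        (by rw [h12]; norm_num)
      exact hno2 s s.2 (by simpa using hs)
    · rw [e, h] at hd; norm_num at hd
  have hinj : Function.Injective (MulAction.toPermHom H (H ⧸ N)) := by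
    rw [← MonoidHom.ker_eq_bot_iff, ← Subgroup.normalCore_eq_ker, hcore]
  have hq5 : Nat.card (H ⧸ N) = 5 := hNi
  let e : (H ⧸ N) ≃ Fin 5 := Finite.equivFinOfCardEq hq5
  let f : H →* Equiv.Perm (Fin 5) := e.permCongrHom.toMonoidHom.comp (MulAction.toPermHom H (H ⧸ N))
  have hf : Function.Injective f := e.permCongrHom.injective.comp hinj
  have hr : Nat.card f.range = 60 := by
    rw [← h60]; exact (Nat.card_congr (MonoidHom.ofInjective hf).toEquiv).symm
  have hi : f.range.index = 2 := by
    have := f.range.card_mul_index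
    rw [hr, Nat.card_perm, Nat.card_fin] at this
    have h120 : Nat.factorial 5 = 120 := rfl
    omega
  have := Equiv.Perm.eq_alternatingGroup_of_index_eq_two hi
  exact ⟨(MonoidHom.ofInjective hf).trans (MulEquiv.subgroupCongr this)⟩

lemma classify_aux [Nonempty X] (h2 : ∀ h : H, h ≠ 1 → (fixedBy X h).ncard = 2)
    (ho : ∀ x : X, (orbit H x).ncard ≠ 1 ∧ (orbit H x).ncard ≠ 2 ∧ (orbit H x).ncard ≠ 6) :
    Nonempty (H ≃* alternatingGroup (Fin 5)) := by
  classical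
  let F : SubMulAction H X :=
    { carrier := {x | stabilizer H x ≠ ⊥}
      smul_mem' := by
        intro c x hx hc
        apply hx
        rw [Subgroup.eq_bot_iff_forall] at hc ⊢
        intro k hk
        simpa using hc _ (conj_mem_stab c k x hk) }
  have hF : ∀ x : X, x ∈ F ↔ stabilizer H x ≠ ⊥ := fun x => Iff.rfl
  have hFfin : (F : Set X).Finite := by
    refine Set.Finite.subset (s := ⋃ h ∈ {h : H | h ≠ 1}, fixedBy X h) ?_ ?_
    · refine Set.Finite.biUnion (Set.toFinite _) fun h hh => ?_
      exact Set.finite_of_ncard_ne_zero (by rw [h2 h hh]; norm_num)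
    · intro x hx
      have hx' : stabilizer H x ≠ ⊥ := hx
      obtain ⟨k, hk, hk1⟩ := (Subgroup.ne_bot_iff_exists_ne_one).mp hx' |>.imp
        fun a ha => And.intro a.2 ha
      simp only [Set.mem_iUnion]
      exact ⟨k, by simpa using hk1, hk⟩
  have : Finite F := hFfin
  have : Fintype F := Fintype.ofFinite _
  have : Fintype H := Fintype.ofFinite _
  have : Fintype (orbitRel.Quotient H F) := Fintype.ofFinite _
  have : ∀ g : H, Fintype (fixedBy F g) := fun g => Fintype.ofFinite _
  have : ∀ b : F, Fintype (stabilizer H b) := fun g => Fintype.ofFinite _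
  have burn := sum_card_fixedBy_eq_card_orbits_mul_card_group H F
  have cls := card_eq_sum_card_group_div_card_stabilizer H F
  set Nn := Fintype.card H with hNn
  set k := Fintype.card (orbitRel.Quotient H F) with hk
  have hfb : ∀ g : H, g ≠ 1 → Fintype.card (fixedBy F g) = 2 := by
    intro g hg
    rw [← h2 g hg, ← Nat.card_eq_fintype_card, ← Nat.card_coe_set_eq]
    refine Nat.card_congr ⟨fun x => ⟨x.1.1, congrArg Subtype.val x.2⟩,
      fun x => ⟨⟨x.1, ?_⟩, Subtype.ext x.2⟩, fun _ => rfl, fun _ => rfl⟩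
    intro hb
    have hm : g ∈ stabilizer H x.1 := x.2
    rw [hb] at hm
    exact hg (Subgroup.mem_bot.mp hm)
  have hfb1 : Fintype.card (fixedBy F (1 : H)) = Fintype.card F := by
    rw [← Nat.card_eq_fintype_card, ← Nat.card_eq_fintype_card, fixedBy_one_eq_univ]
    exact Nat.card_univ
  have hNpos : 0 < Nn := Fintype.card_pos
  have hsum : Fintype.card F + 2 * (Nn - 1) = k * Nn := by
    rw [← burn, ← Finset.add_sum_erase _ _ (Finset.mem_univ (1 : H)), hfb1,
      Finset.sum_congr rfl (fun g hg => hfb g (Finset.ne_of_mem_erase hg))]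
    simp [mul_comm, hNn]
  have hstabF : ∀ x : F, stabilizer H x = stabilizer H (x : X) := by
    intro x; ext g
    simp [mem_stabilizer_iff, Subtype.ext_iff]
  let o : orbitRel.Quotient H F → ℕ := fun w => (orbit H ((w.out : F) : X)).ncard
  let n : orbitRel.Quotient H F → ℕ := fun w => Nat.card (stabilizer H ((w.out : F) : X))
  have hon : ∀ w, o w * n w = Nn := by
    intro w
    rw [hNn, ← Nat.card_eq_fintype_card]
    exact orb_stab _
  have hn2 : ∀ w, 2 ≤ n w := by
    intro w
    have h1 : 1 < Nat.card (stabilizer H ((w.out : F) : X)) := by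
      rw [Subgroup.one_lt_card_iff_ne_bot]
      exact w.out.2
    exact h1
  have hcardF : Fintype.card F = ∑ w, o w := by
    rw [cls]
    refine Finset.sum_congr rfl fun w _ => ?_
    rw [← Nat.card_eq_fintype_card, hstabF, ← hon w]
    exact Nat.mul_div_cancel _ Nat.card_pos
  have ho3 : ∀ w, 3 ≤ o w ∧ o w ≠ 6 := by
    intro w
    have h1 := ho ((w.out : F) : X)
    have h0 : o w ≠ 0 := by
      intro h; have := hon w; rw [h] at this; omega
    simp only [o] at *
    omega
  have hN2 : 2 ≤ Nn := by
    obtain ⟨x⟩ := ‹Nonempty X›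
    by_contra h
    have h1 := orb_stab (H := H) x
    rw [Nat.card_eq_fintype_card (α := H), ← hNn] at h1
    have : Nn = 1 := by omega
    rw [this] at h1
    exact (ho x).1 (Nat.eq_one_of_mul_eq_one_right h1)
  have hle : 2 * ∑ w, o w ≤ k * Nn := by
    rw [Finset.mul_sum]
    calc ∑ w, 2 * o w ≤ ∑ _w : orbitRel.Quotient H F, Nn := by
          refine Finset.sum_le_sum fun w _ => ?_
          rw [← hon w, mul_comm]
          exact Nat.mul_le_mul_left _ (hn2 w)
      _ = k * Nn := by simp [hk]
  have hge : 3 * k ≤ ∑ w, o w := by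
    calc 3 * k = ∑ _w : orbitRel.Quotient H F, 3 := by simp [hk, mul_comm]
      _ ≤ _ := Finset.sum_le_sum fun w _ => (ho3 w).1
  rw [hcardF] at hsum
  have hk3 : k = 3 := by
    have hlt : k < 4 := by
      by_contra h
      have : 4 * Nn ≤ k * Nn := Nat.mul_le_mul_right _ (by omega)
      omega
    interval_cases k <;> omega
  let e : Fin 3 ≃ orbitRel.Quotient H F := (Fintype.equivFinOfCardEq hk3).symm
  obtain ⟨h60, hval, hinj⟩ := num_aux2 Nn (o ∘ e) (n ∘ e) (fun i => hon _) (fun i => hn2 _)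
    (by
      have : ∑ i, (o ∘ e) i = ∑ w, o w := Equiv.sum_comp e o
      rw [this]; rw [hk3] at hsum; omega) (fun i => (ho3 _).1) (fun i => (ho3 _).2)
  have hout : ∀ x : F, Nat.card (stabilizer H (x : X)) =
      n (Quotient.mk'' x : orbitRel.Quotient H F) := by
    intro x
    have hr : (orbitRel H F) (Quotient.mk'' x : orbitRel.Quotient H F).out x :=
      Quotient.mk_out (s := orbitRel H F) x
    rw [orbitRel_apply] at hr
    have := Nat.card_congr (stabilizerEquivStabilizerOfOrbitRel
      (show orbitRel H F _ _ from hr)).toEquiv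
    rw [hstabF, hstabF] at this
    exact this.symm
  refine A5_of_action (X := X) h2 (by rw [Nat.card_eq_fintype_card]; exact h60) ?_ ?_
  · intro x
    by_cases hx : stabilizer H x = ⊥
    · exact Or.inl hx
    · right
      have := hout ⟨x, hx⟩
      obtain ⟨i, hi⟩ := e.surjective (Quotient.mk'' (⟨x, hx⟩ : F))
      have hv := hval i
      simp only [Function.comp, hi] at hv
      rw [← this] at hv
      exact hv
  · intro x y hxy hx
    have hy : stabilizer H y ≠ ⊥ := by
      rw [← Subgroup.one_lt_card_iff_ne_bot] at hx ⊢
      omega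
    have h1 := hout ⟨x, hx⟩
    have h3 := hout ⟨y, hy⟩
    have hinj' : Function.Injective n := by
      have := hinj.comp e.symm.injective
      simpa [Function.comp_assoc] using this
    have hq := hinj' (h1.symm.trans (hxy.trans h3))
    have hr : (orbitRel H F) ⟨x, hx⟩ ⟨y, hy⟩ := Quotient.exact hq
    rw [orbitRel_apply] at hr
    obtain ⟨g, hg⟩ := hr
    have hg' : g • y = x := congrArg Subtype.val hg
    exact ⟨g⁻¹, by simp [← hg']⟩
end
end GroupPart



section SemiPart

/-- the determinant pairing -/
def ellTC (w v : Fin 2 → ℂ) : ℂ := w 0 * v 1 - w 1 * v 0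

lemma ellTC_map (A : (Fin 2 → ℂ) ≃ₗ[ℂ] (Fin 2 → ℂ)) :
    ∃ d : ℂ, ∀ w v, ellTC (A w) (A v) = d * ellTC w v := by
  refine ⟨ellTC (A ![1, 0]) (A ![0, 1]), fun w v => ?_⟩
  have hdec : ∀ v : Fin 2 → ℂ, A v = v 0 • A ![1, 0] + v 1 • A ![0, 1] := by
    intro v
    rw [← map_smul, ← map_smul, ← map_add]
    congr 1
    ext i; fin_cases i <;> simp
  rw [hdec w, hdec v]
  simp [ellTC]; ring

lemma form3 (a b c : Fin 2 → ℂ) :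
    ∃ u : Fin 4 → ℂ, ∀ v, ellTC a v * (ellTC b v * ellTC c v) = u ⬝ᵥ nuTC v := by
  refine ⟨![-(a 1 * b 1 * c 1), a 0 * b 1 * c 1 + a 1 * b 0 * c 1 + a 1 * b 1 * c 0,
    -(a 0 * b 0 * c 1 + a 0 * b 1 * c 0 + a 1 * b 0 * c 0), a 0 * b 0 * c 0], fun v => ?_⟩
  simp [ellTC, nuTC, dotProduct, Fin.sum_univ_four]; ring

lemma prod_trans (A : (Fin 2 → ℂ) ≃ₗ[ℂ] (Fin 2 → ℂ))
    (S : Finset (Projectivization ℂ (Fin 2 → ℂ))) (hA : ∀ p ∈ S, A • p ∈ S) :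
    ∃ c : ℂ, ∀ v, ∏ p ∈ S, ellTC p.rep (A v) = c * ∏ p ∈ S, ellTC p.rep v := by
  classical
  obtain ⟨d, hd⟩ := ellTC_map A
  have himg : S.image (fun p => A • p) = S := by
    apply Finset.eq_of_subset_of_card_le
    · intro p hp
      obtain ⟨q, hq, rfl⟩ := Finset.mem_image.mp hp
      exact hA q hq
    · rw [Finset.card_image_of_injective _ (MulAction.injective A)]
  have hrep : ∀ q : Projectivization ℂ (Fin 2 → ℂ), ∃ k : ℂ, (A • q).rep = k • A q.rep := by
    intro q
    have h1 : Projectivization.mk ℂ (A • q).rep (A • q).rep_nonzero =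
        Projectivization.mk ℂ (A q.rep) (by simpa using q.rep_nonzero) := by
      rw [Projectivization.mk_rep]
      conv_lhs => rw [← q.mk_rep]
      rw [Projectivization.smul_mk]; rfl
    rw [Projectivization.mk_eq_mk_iff'] at h1
    obtain ⟨k, hk⟩ := h1
    exact ⟨k, hk.symm⟩
  choose k hk using hrep
  refine ⟨∏ q ∈ S, (k q * d), fun v => ?_⟩
  conv_lhs => rw [← himg]
  rw [Finset.prod_image (fun x _ y _ h => MulAction.injective A h), ← Finset.prod_mul_distrib]
  refine Finset.prod_congr rfl fun q _ => ?_
  rw [hk, mul_assoc, ← hd]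
  simp [ellTC]; ring

lemma mk_eq_of_ellTC {w v : Fin 2 → ℂ} (hw : w ≠ 0) (hv : v ≠ 0)
    (h : ellTC w v = 0) : Projectivization.mk ℂ w hw = Projectivization.mk ℂ v hv := by
  rw [Projectivization.mk_eq_mk_iff']
  unfold ellTC at h
  by_cases h0 : v 0 = 0
  · have h1 : v 1 ≠ 0 := by
      intro h1; apply hv; ext i; fin_cases i <;> simpa
    have hw : w 0 = 0 := by
      rw [h0] at h; simpa [h1] using h
    refine ⟨w 1 / v 1, ?_⟩
    ext i; fin_cases i
    · simp [h0, hw]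
    · simp [h1]
  · refine ⟨w 0 / v 0, ?_⟩
    ext i; fin_cases i
    · simp [h0]
    · simp; field_simp; linear_combination h

lemma exists_prod_ne_zero (S : Finset (Projectivization ℂ (Fin 2 → ℂ))) :
    ∃ v, ∏ p ∈ S, ellTC p.rep v ≠ 0 := by
  classical
  have hne : ∀ z : ℂ, (![z, 1] : Fin 2 → ℂ) ≠ 0 := fun z h => by simpa using congrFun h 1
  let F : ℂ → Projectivization ℂ (Fin 2 → ℂ) := fun z => Projectivization.mk ℂ ![z, 1] (hne z)
  have hF : Function.Injective F := by
    intro z z' h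
    obtain ⟨a, ha⟩ := (Projectivization.mk_eq_mk_iff' ..).mp h
    have h0 := congrFun ha 0
    have h1 := congrFun ha 1
    simp at h0 h1
    rw [h1] at h0; simpa using h0.symm
  obtain ⟨z, hz⟩ : ∃ z, F z ∉ S := by
    by_contra hcon
    push Not at hcon
    have : Set.Finite (Set.range F) := S.finite_toSet.subset (by rintro _ ⟨z, rfl⟩; exact hcon z)
    exact Set.infinite_range_of_injective hF this
  refine ⟨![z, 1], Finset.prod_ne_zero_iff.mpr fun p hp h => hz ?_⟩
  rw [← p.mk_rep, mk_eq_of_ellTC p.rep_nonzero (hne z) h] at hp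
  exact hp

lemma no_six (G : Subgroup (SpecialLinearGroup (Fin 4) ℂ)) (hGfin : Finite G)
    (hnoquad : ∀ Q : MvPolynomial (Fin 4) ℂ, Q.IsHomogeneous 2 →
      (∃ χ : G →* ℂˣ, ∀ (g : G) (v : Fin 4 → ℂ),
        MvPolynomial.eval
            (Matrix.mulVec
              (((g : SpecialLinearGroup (Fin 4) ℂ)⁻¹ : SpecialLinearGroup (Fin 4) ℂ) :
                Matrix (Fin 4) (Fin 4) ℂ) v) Q
          = (χ g : ℂ) * MvPolynomial.eval v Q) →
      Q = 0)
    (S : Finset (Projectivization ℂ (Fin 2 → ℂ))) (hS : S.card = 6)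
    (hlift : ∀ g ∈ G, ∃ A : (Fin 2 → ℂ) ≃ₗ[ℂ] (Fin 2 → ℂ),
      (∀ v, (g : Matrix (Fin 4) (Fin 4) ℂ) *ᵥ nuTC v = nuTC (A v)) ∧ ∀ p ∈ S, A • p ∈ S) :
    False := by
  classical
  have := Fintype.ofFinite G
  obtain ⟨v0, hv0⟩ := exists_prod_ne_zero S
  obtain ⟨u, w, huw⟩ : ∃ u w : Fin 4 → ℂ, ∀ v,
      (u ⬝ᵥ nuTC v) * (w ⬝ᵥ nuTC v) = ∏ p ∈ S, ellTC p.rep v := by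
    obtain ⟨T, hTS, hT⟩ := Finset.exists_subset_card_eq (s := S) (n := 3) (by omega)
    have hT' : (S \ T).card = 3 := by rw [Finset.card_sdiff_of_subset hTS]; omega
    have h3 : ∀ T : Finset (Projectivization ℂ (Fin 2 → ℂ)), T.card = 3 →
        ∃ u : Fin 4 → ℂ, ∀ v, ∏ p ∈ T, ellTC p.rep v = u ⬝ᵥ nuTC v := by
      intro T hT
      obtain ⟨a, b, c, hab, hac, hbc, rfl⟩ := Finset.card_eq_three.mp hT
      obtain ⟨u, hu⟩ := form3 a.rep b.rep c.rep
      refine ⟨u, fun v => ?_⟩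
      rw [← hu, Finset.prod_insert (by simp [hab, hac]), Finset.prod_insert (by simp [hbc]),
        Finset.prod_singleton]
    obtain ⟨u, hu⟩ := h3 _ hT
    obtain ⟨w, hw⟩ := h3 _ hT'
    refine ⟨u, w, fun v => ?_⟩
    rw [← hu, ← hw, mul_comm, Finset.prod_sdiff hTS]
  let q : (Fin 4 → ℂ) → ℂ := fun x => (u ⬝ᵥ x) * (w ⬝ᵥ x)
  have hq : ∀ v, q (nuTC v) = ∏ p ∈ S, ellTC p.rep v := huw
  let M : G → Matrix (Fin 4) (Fin 4) ℂ := fun g => (g : SpecialLinearGroup (Fin 4) ℂ).1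
  have hM1 : M 1 = 1 := rfl
  have hMm : ∀ g h, M (g * h) = M g * M h := fun g h => by simp [M]
  have hc : ∀ g : G, ∃ c : ℂ, ∀ v, q (M g *ᵥ nuTC v) = c * q (nuTC v) := by
    rintro ⟨g, hg⟩
    obtain ⟨A, hA, hAS⟩ := hlift g hg
    obtain ⟨c, hc⟩ := prod_trans A S hAS
    refine ⟨c, fun v => ?_⟩
    rw [show M ⟨g, hg⟩ *ᵥ nuTC v = nuTC (A v) from hA v, hq, hq, hc]
  choose c hc using hc
  have hq0 : q (nuTC v0) ≠ 0 := by rw [hq]; exact hv0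
  let cM : G →* ℂ :=
    { toFun := c
      map_one' := by
        have := hc 1 v0
        rw [hM1, one_mulVec] at this
        exact (mul_eq_right₀ hq0).mp this.symm
      map_mul' := fun g h => by
        have h1 := hc (g * h) v0
        obtain ⟨B, hB, -⟩ := hlift h h.2
        have hB' : M h *ᵥ nuTC v0 = nuTC (B v0) := hB v0
        rw [hMm, ← mulVec_mulVec, hB', hc, ← hB', hc, ← mul_assoc] at h1
        exact (mul_right_cancel₀ hq0 h1).symm }
  let χ : G →* ℂˣ := cM.toHomUnits
  have hχ : ∀ g, (χ g : ℂ) = c g := fun g => rfl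
  let lin : (Fin 4 → ℂ) → MvPolynomial (Fin 4) ℂ := fun u =>
    ∑ i, MvPolynomial.C (u i) * MvPolynomial.X i
  have hlin : ∀ u x, MvPolynomial.eval x (lin u) = u ⬝ᵥ x := by
    intro u x; simp [lin, dotProduct]
  have hlinh : ∀ u, (lin u).IsHomogeneous 1 := by
    intro u
    refine MvPolynomial.IsHomogeneous.sum _ _ _ fun i _ => ?_
    exact MvPolynomial.isHomogeneous_C_mul_X _ _
  let Q : MvPolynomial (Fin 4) ℂ :=
    ∑ h : G, MvPolynomial.C (((χ h)⁻¹ : ℂˣ) : ℂ) * (lin (u ᵥ* M h) * lin (w ᵥ* M h))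
  have hQe : ∀ x, MvPolynomial.eval x Q = ∑ h : G, (((χ h)⁻¹ : ℂˣ) : ℂ) * q (M h *ᵥ x) := by
    intro x
    simp only [Q, map_sum, map_mul, MvPolynomial.eval_C, hlin, q, dotProduct_mulVec]
  have hQ0 : Q = 0 := by
    refine hnoquad Q ?_ ⟨χ⁻¹, fun g v => ?_⟩
    · refine MvPolynomial.IsHomogeneous.sum _ _ _ fun i _ => ?_
      have := (MvPolynomial.isHomogeneous_C (Fin 4) (((χ i)⁻¹ : ℂˣ) : ℂ)).mul
        ((hlinh (u ᵥ* M i)).mul (hlinh (w ᵥ* M i)))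
      simpa using this
    · change MvPolynomial.eval (M g⁻¹ *ᵥ v) Q = _
      rw [hQe, hQe, Finset.mul_sum, ← Equiv.sum_comp (Equiv.mulRight g)]
      refine Finset.sum_congr rfl fun k _ => ?_
      rw [mulVec_mulVec, ← hMm]
      rw [Equiv.coe_mulRight, mul_inv_cancel_right, map_mul, _root_.mul_inv_rev,
        MonoidHom.inv_apply, Units.val_mul, mul_assoc]
  have h0 := hQe (nuTC v0)
  rw [hQ0, map_zero] at h0
  have h1 : ∀ h : G, (((χ h)⁻¹ : ℂˣ) : ℂ) * q (M h *ᵥ nuTC v0) = q (nuTC v0) := by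
    intro h
    rw [hc, ← hχ, ← mul_assoc, Units.inv_mul, one_mul]
  rw [Finset.sum_congr rfl (fun h _ => h1 h)] at h0
  simp [hq0] at h0

lemma no_small (G : Subgroup (SpecialLinearGroup (Fin 4) ℂ))
    (hirr : ∀ W : Submodule ℂ (Fin 4 → ℂ),
      (∀ g ∈ G, ∀ v ∈ W, Matrix.mulVec (g : Matrix (Fin 4) (Fin 4) ℂ) v ∈ W) →
      W = ⊥ ∨ W = ⊤)
    (S : Finset (Projectivization ℂ (Fin 2 → ℂ))) (hS : S.card < 4) (hne : S.Nonempty)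
    (hlift : ∀ g ∈ G, ∃ A : (Fin 2 → ℂ) ≃ₗ[ℂ] (Fin 2 → ℂ),
      (∀ v, (g : Matrix (Fin 4) (Fin 4) ℂ) *ᵥ nuTC v = nuTC (A v)) ∧ ∀ p ∈ S, A • p ∈ S) :
    False := by
  classical
  let T : Finset (Fin 4 → ℂ) := S.image fun p => nuTC p.rep
  have hTc : T.card ≤ S.card := Finset.card_image_le
  have hW : ∀ g ∈ G, ∀ v ∈ Submodule.span ℂ (T : Set (Fin 4 → ℂ)),
      (g : Matrix (Fin 4) (Fin 4) ℂ) *ᵥ v ∈ Submodule.span ℂ (T : Set (Fin 4 → ℂ)) := by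
    intro g hg v hv
    obtain ⟨A, hA, hAS⟩ := hlift g hg
    induction hv using Submodule.span_induction with
    | zero => simp
    | add x y _ _ hx hy => rw [mulVec_add]; exact Submodule.add_mem _ hx hy
    | smul a x _ hx => rw [mulVec_smul]; exact Submodule.smul_mem _ _ hx
    | mem x hx =>
      obtain ⟨p, hp, rfl⟩ := Finset.mem_image.mp (Finset.mem_coe.mp hx)
      rw [hA]
      have h1 : Projectivization.mk ℂ (A p.rep) (by simpa using p.rep_nonzero) =
          Projectivization.mk ℂ (A • p).rep (A • p).rep_nonzero := by
        rw [Projectivization.mk_rep]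
        conv_rhs => rw [← p.mk_rep]
        rw [Projectivization.smul_mk]; rfl
      rw [Projectivization.mk_eq_mk_iff'] at h1
      obtain ⟨k, hk⟩ := h1
      rw [← hk, nuTC_smul]
      exact Submodule.smul_mem _ _ (Submodule.subset_span
        (Finset.mem_coe.mpr (Finset.mem_image_of_mem _ (hAS p hp))))
  rcases hirr (Submodule.span ℂ (T : Set (Fin 4 → ℂ))) hW with h | h
  · obtain ⟨p, hp⟩ := hne
    rw [Submodule.span_eq_bot] at h
    exact nuTC_ne_zero p.rep_nonzero (h _ (Finset.mem_coe.mpr (Finset.mem_image_of_mem _ hp)))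
  · have h1 := finrank_span_finset_le_card (R := ℂ) T
    rw [Set.finrank, h, finrank_top] at h1
    simp at h1; omega

end SemiPart

/-- If a finite irreducible subgroup `G ≤ SL(4, ℂ)` without nonzero degree-2
homogeneous semi-invariants maps the twisted cubic onto itself (projectively), then its image
`Ḡ` in `PGL(4, ℂ)` is isomorphic to `A₅`. -/
theorem stmt_8 (G : Subgroup (SpecialLinearGroup (Fin 4) ℂ)) (hGfin : Finite G)
    (hirr : ∀ W : Submodule ℂ (Fin 4 → ℂ),
      (∀ g ∈ G, ∀ v ∈ W, Matrix.mulVec (g : Matrix (Fin 4) (Fin 4) ℂ) v ∈ W) →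
      W = ⊥ ∨ W = ⊤)
    (hnoquad : ∀ Q : MvPolynomial (Fin 4) ℂ, Q.IsHomogeneous 2 →
      (∃ χ : G →* ℂˣ, ∀ (g : G) (v : Fin 4 → ℂ),
        MvPolynomial.eval
            (Matrix.mulVec
              (((g : SpecialLinearGroup (Fin 4) ℂ)⁻¹ : SpecialLinearGroup (Fin 4) ℂ) :
                Matrix (Fin 4) (Fin 4) ℂ) v) Q
          = (χ g : ℂ) * MvPolynomial.eval v Q) →
      Q = 0)
    (hC : ∀ g ∈ G, ∀ (v : Fin 4 → ℂ) (hv : v ≠ 0)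
      (hgv : Matrix.mulVec (g : Matrix (Fin 4) (Fin 4) ℂ) v ≠ 0),
      Projectivization.mk ℂ v hv ∈ twistedCubic →
      Projectivization.mk ℂ (Matrix.mulVec (g : Matrix (Fin 4) (Fin 4) ℂ) v) hgv ∈ twistedCubic)
    (Gbar : Subgroup (GL (Fin 4) ℂ ⧸ Subgroup.center (GL (Fin 4) ℂ)))
    (hGbar : Gbar = Subgroup.map
      ((QuotientGroup.mk' (Subgroup.center (GL (Fin 4) ℂ))).comp
        SpecialLinearGroup.toGL) G) :
    Nonempty (Gbar ≃* alternatingGroup (Fin 5)) := by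
  classical
  have hcm : ∀ g h : SpecialLinearGroup (Fin 4) ℂ,
      ((g * h : SpecialLinearGroup (Fin 4) ℂ) : Matrix (Fin 4) (Fin 4) ℂ) =
        (g : Matrix (Fin 4) (Fin 4) ℂ) * (h : Matrix (Fin 4) (Fin 4) ℂ) := fun _ _ => rfl
  have hc1 : ((1 : SpecialLinearGroup (Fin 4) ℂ) : Matrix (Fin 4) (Fin 4) ℂ) = 1 := rfl
  have hinj : ∀ (g : SpecialLinearGroup (Fin 4) ℂ) (x : Fin 4 → ℂ),
      (g : Matrix (Fin 4) (Fin 4) ℂ) *ᵥ x = 0 → x = 0 := by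
    intro g x hx
    have h1 : ((g⁻¹ * g : SpecialLinearGroup (Fin 4) ℂ) : Matrix (Fin 4) (Fin 4) ℂ) *ᵥ x = 0 := by
      rw [hcm, ← mulVec_mulVec, hx, mulVec_zero]
    rwa [inv_mul_cancel, hc1, one_mulVec] at h1
  have hlift : ∀ g ∈ G, ∃ A : (Fin 2 → ℂ) ≃ₗ[ℂ] (Fin 2 → ℂ),
      ∀ v, (g : Matrix (Fin 4) (Fin 4) ℂ) *ᵥ nuTC v = nuTC (A v) := by
    intro g hg
    refine lift_exists _ (hinj g) fun v => ?_
    by_cases hv : v = 0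
    · refine ⟨0, 0, ?_⟩
      have : nuTC v = 0 := by subst hv; ext i; fin_cases i <;> simp [nuTC]
      rw [this, mulVec_zero, zero_smul]
    · have hn := nuTC_ne_zero hv
      obtain ⟨s, t, h, hst⟩ := hC g hg (nuTC v) hn (fun h => hn (hinj g _ h)) ⟨v 0, v 1, hn, rfl⟩
      rw [Projectivization.mk_eq_mk_iff'] at hst
      obtain ⟨a, ha⟩ := hst
      exact ⟨a, ![s, t], ha.symm⟩
  -- the group of lifts
  let L : Subgroup ((Fin 2 → ℂ) ≃ₗ[ℂ] (Fin 2 → ℂ)) :=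
    { carrier := {A | ∃ g ∈ G, ∀ v, (g : Matrix (Fin 4) (Fin 4) ℂ) *ᵥ nuTC v = nuTC (A v)}
      one_mem' := ⟨1, G.one_mem, fun v => by simp⟩
      mul_mem' := by
        rintro A B ⟨g, hg, hA⟩ ⟨h, hh, hB⟩
        refine ⟨g * h, G.mul_mem hg hh, fun v => ?_⟩
        rw [hcm, ← mulVec_mulVec, hB, hA]; rfl
      inv_mem' := by
        rintro A ⟨g, hg, hA⟩
        refine ⟨g⁻¹, G.inv_mem hg, fun v => ?_⟩
        have h1 : nuTC v = (g : Matrix (Fin 4) (Fin 4) ℂ) *ᵥ nuTC (A⁻¹ v) := by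
          rw [hA]
          exact congrArg nuTC (A.apply_symm_apply v).symm
        rw [h1, mulVec_mulVec, ← hcm, inv_mul_cancel,
          hc1, one_mulVec] }
  have hL : ∀ A : L, ∃ g ∈ G, ∀ v, (g : Matrix (Fin 4) (Fin 4) ℂ) *ᵥ nuTC v = nuTC (A.1 v) :=
    fun A => A.2
  choose γ hγG hγ using hL
  have huniq : ∀ (A : L) (g : SpecialLinearGroup (Fin 4) ℂ),
      (∀ v, (g : Matrix (Fin 4) (Fin 4) ℂ) *ᵥ nuTC v = nuTC (A.1 v)) → γ A = g := by
    intro A g hg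
    exact Subtype.ext (nuTC_span fun v => (hγ A v).trans (hg v).symm)
  let φ : L →* SpecialLinearGroup (Fin 4) ℂ := MonoidHom.mk' γ fun A B => by
    refine huniq _ _ fun v => ?_
    rw [hcm, ← mulVec_mulVec, hγ, hγ]; rfl
  have hφ : ∀ A v, ((φ A : SpecialLinearGroup (Fin 4) ℂ) : Matrix (Fin 4) (Fin 4) ℂ) *ᵥ nuTC v
      = nuTC (A.1 v) := hγ
  have hφr : φ.range = G := by
    ext g
    constructor
    · rintro ⟨A, rfl⟩; exact hγG A
    · intro hg
      obtain ⟨A, hA⟩ := hlift g hg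
      exact ⟨⟨A, g, hg, hA⟩, huniq _ _ hA⟩
  let ψ := ((QuotientGroup.mk' (Subgroup.center (GL (Fin 4) ℂ))).comp
        SpecialLinearGroup.toGL).comp φ
  have hψr : ψ.range = Gbar := by
    rw [hGbar, ← hφr, MonoidHom.range_comp]
  let ρ : L →* Equiv.Perm (Projectivization ℂ (Fin 2 → ℂ)) :=
    MulAction.toPermHom L (Projectivization ℂ (Fin 2 → ℂ))
  have hρ : ∀ (A : L) p, ρ A p = A.1 • p := fun A p => rfl
  have hker : ψ.ker = ρ.ker := by
    ext A
    have h1 : A ∈ ψ.ker ↔ ∃ a : ℂ, ∀ v, nuTC (A.1 v) = a • nuTC v := by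
      rw [MonoidHom.mem_ker]
      change ((SpecialLinearGroup.toGL (φ A) : GL (Fin 4) ℂ) :
        GL (Fin 4) ℂ ⧸ Subgroup.center (GL (Fin 4) ℂ)) = 1 ↔ _
      rw [QuotientGroup.eq_one_iff,
        Matrix.GeneralLinearGroup.mem_center_iff_val_mem_range_scalar]
      change (φ A).1 ∈ _ ↔ _
      have hsc : ∀ (a : ℂ) (x : Fin 4 → ℂ), (scalar (Fin 4) a) *ᵥ x = a • x := by
        intro a x
        rw [scalar_apply]
        ext i; simp [mulVec_diagonal]
      constructor
      · rintro ⟨a, ha⟩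
        refine ⟨a, fun v => ?_⟩
        rw [← hφ, ← hsc, ha]
      · rintro ⟨a, ha⟩
        refine ⟨a, nuTC_span fun v => ?_⟩
        rw [hsc, ← ha, ← hφ]
    have h2 : A ∈ ρ.ker ↔ ∀ p : Projectivization ℂ (Fin 2 → ℂ), A.1 • p = p := by
      rw [MonoidHom.mem_ker, Equiv.ext_iff]
      rfl
    rw [h1, h2]
    constructor
    · rintro ⟨a, ha⟩ p
      induction p using Projectivization.ind with
      | h v hv =>
        rw [Projectivization.smul_mk]
        exact mk_eq_of_ellTC _ hv (nuTC_prop (ha v))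
    · intro h
      obtain ⟨c, hc⟩ := scalar_of_trivial A.1 h
      exact ⟨c ^ 3, fun v => by rw [hc, nuTC_smul]⟩
  let e : Gbar ≃* ρ.range :=
    (MulEquiv.subgroupCongr hψr).symm.trans
      ((QuotientGroup.quotientKerEquivRange ψ).symm.trans
        ((QuotientGroup.quotientMulEquivOfEq hker).trans (QuotientGroup.quotientKerEquivRange ρ)))
  have hfinGb : Finite Gbar := by
    rw [hGbar]
    exact Finite.of_surjective _ (MonoidHom.subgroupMap_surjective _ G)
  have hfin : Finite ρ.range := Finite.of_equiv _ e.toEquiv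
  have hnePr : Nonempty (Projectivization ℂ (Fin 2 → ℂ)) := inferInstance
  suffices h : Nonempty (ρ.range ≃* alternatingGroup (Fin 5)) by
    exact ⟨e.trans h.some⟩
  refine classify_aux (X := Projectivization ℂ (Fin 2 → ℂ)) ?_ ?_
  · rintro ⟨_, A, rfl⟩ hne
    have hA : ∀ p : Projectivization ℂ (Fin 2 → ℂ), (ρ A) p = A.1 • p := hρ A
    have hn : (ρ A) ^ Nat.card ρ.range = 1 := by
      have := pow_card_eq_one' (x := (⟨ρ A, A, rfl⟩ : ρ.range))
      exact congrArg Subtype.val this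
    refine fixed_two A.1 (Nat.card ρ.range) Nat.card_pos.ne' ?_ ?_
    · intro p
      have h1 : ρ (A ^ Nat.card ρ.range) p = p := by rw [map_pow, hn]; rfl
      exact h1
    · intro h
      exact hne (Subtype.ext (Equiv.ext h))
  · intro x
    have hlift2 : ∀ (hf : (MulAction.orbit ρ.range x).Finite), ∀ g ∈ G,
        ∃ A : (Fin 2 → ℂ) ≃ₗ[ℂ] (Fin 2 → ℂ),
        (∀ v, (g : Matrix (Fin 4) (Fin 4) ℂ) *ᵥ nuTC v = nuTC (A v)) ∧
          ∀ p ∈ hf.toFinset, A • p ∈ hf.toFinset := by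
      intro hf g hg
      obtain ⟨A, hA⟩ := hlift g hg
      refine ⟨A, hA, fun p hp => ?_⟩
      rw [Set.Finite.mem_toFinset] at hp ⊢
      let A' : L := ⟨A, g, hg, hA⟩
      exact MulAction.mem_orbit_of_mem_orbit (⟨ρ A', A', rfl⟩ : ρ.range) hp
    have hf : (MulAction.orbit ρ.range x).Finite := Set.finite_range _
    have hcard := Set.ncard_eq_toFinset_card _ hf
    have hne : hf.toFinset.Nonempty := by
      rw [Set.Finite.toFinset_nonempty]; exact MulAction.nonempty_orbit x
    refine ⟨fun h => ?_, fun h => ?_, fun h => ?_⟩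
    · exact no_small G hirr hf.toFinset (by omega) hne (hlift2 hf)
    · exact no_small G hirr hf.toFinset (by omega) hne (hlift2 hf)
    · exact no_six G hGfin hnoquad hf.toFinset (by omega) (hlift2 hf)
end
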